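/- arXiv:1301.6826 — 2 statements merged into one kernel-verified Lean document; each statement's English description precedes it below -/
import Mathlib

section
/- Let G be a finite solvable SST-group with nilpotent residual L, and let D be a complement of L in G (a system normalizer of G), so that G = L ⋊ D with L a normal abelian Hall subgroup and D a nilpotent Hall subgroup. Then the Frattini subgroup satisfies Φ(G) = Φ(L) × Φ(D). Furthermore, G/Φ(G) is a complemented group, i.e., every subgroup of G/Φ(G) has a complement in G/Φ(G). -/
open scoped Pointwise

section Defs

variable {G : Type*} [Group G]

/-- `K` is an SS-permutable supplement of `H` in `G`: `HK = G` and `H` permutes with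
every Sylow subgroup of `K`. -/
def IsSSSupplement (H K : Subgroup G) : Prop :=
  (H : Set G) * (K : Set G) = Set.univ ∧
    ∀ (p : ℕ) [Fact p.Prime] (P : Sylow p K),
      (H : Set G) * ((P.toSubgroup.map K.subtype : Subgroup G) : Set G) =
        ((P.toSubgroup.map K.subtype : Subgroup G) : Set G) * (H : Set G)

/-- `H` is SS-permutable in `G`: `H` has a supplement `K` such that `H` permutes with
every Sylow subgroup of `K`. -/
def IsSSPermutable (H : Subgroup G) : Prop :=
  ∃ K : Subgroup G, IsSSSupplement H K

/-- `H` is NSS-permutable in `G`: `H` has a normal supplement `K` such that `H` permutes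
with every Sylow subgroup of `K`. -/
def IsNSSPermutable (H : Subgroup G) : Prop :=
  ∃ K : Subgroup G, K.Normal ∧ IsSSSupplement H K

/-- `H` is S-permutable in `G`: it permutes with every Sylow subgroup of `G`. -/
def IsSPermutable (H : Subgroup G) : Prop :=
  ∀ (p : ℕ) [Fact p.Prime] (P : Sylow p G),
    (H : Set G) * ((P : Subgroup G) : Set G) = ((P : Subgroup G) : Set G) * (H : Set G)

/-- `H` is semipermutable in `G`: `HX = XH` for every subgroup `X` with `gcd(|H|,|X|) = 1`. -/
def IsSemipermutable (H : Subgroup G) : Prop :=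
  ∀ X : Subgroup G, Nat.Coprime (Nat.card H) (Nat.card X) →
    (H : Set G) * (X : Set G) = (X : Set G) * (H : Set G)

/-- `H` is S-semipermutable in `G`: `HQ = QH` for every Sylow `q`-subgroup `Q` of `G`
with `q` a prime not dividing `|H|`. -/
def IsSSemipermutable (H : Subgroup G) : Prop :=
  ∀ (q : ℕ) [Fact q.Prime], ¬ q ∣ Nat.card H → ∀ Q : Sylow q G,
    (H : Set G) * ((Q : Subgroup G) : Set G) = ((Q : Subgroup G) : Set G) * (H : Set G)

end Defs

/-- `G` is an SST-group: SS-permutability is a transitive relation. -/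
def IsSSTGroup (G : Type*) [Group G] : Prop :=
  ∀ H K : Subgroup G, H ≤ K → IsSSPermutable (H.subgroupOf K) → IsSSPermutable K →
    IsSSPermutable H

/-- `G` is an NSST-group: NSS-permutability is a transitive relation. -/
def IsNSSTGroup (G : Type*) [Group G] : Prop :=
  ∀ H K : Subgroup G, H ≤ K → IsNSSPermutable (H.subgroupOf K) → IsNSSPermutable K →
    IsNSSPermutable H

/-- `G` is a PST-group: S-permutability is a transitive relation. -/
def IsPSTGroup (G : Type*) [Group G] : Prop :=
  ∀ H K : Subgroup G, H ≤ K → IsSPermutable (H.subgroupOf K) → IsSPermutable K →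
    IsSPermutable H

/-- `G` is a BT-group: semipermutability is a transitive relation. -/
def IsBTGroup (G : Type*) [Group G] : Prop :=
  ∀ H K : Subgroup G, H ≤ K → IsSemipermutable (H.subgroupOf K) → IsSemipermutable K →
    IsSemipermutable H

/-- `L` is the nilpotent residual of `G`: the smallest normal subgroup of `G`
with nilpotent quotient. -/
def IsNilpotentResidual {G : Type*} [Group G] (L : Subgroup G) : Prop :=
  L.Normal ∧ ∀ [L.Normal], Group.IsNilpotent (G ⧸ L) ∧
    ∀ (N : Subgroup G) [N.Normal], Group.IsNilpotent (G ⧸ N) → L ≤ N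

open Subgroup

/-- A subgroup containing, for each prime `p`, a Sylow `p`-subgroup is the whole group. -/
theorem Subgroup.eq_top_of_forall_exists_sylow_le {G : Type*} [Group G] [Finite G]
    (T : Subgroup G) (h : ∀ p : ℕ, p.Prime → ∃ S : Sylow p G, (S : Subgroup G) ≤ T) : T = ⊤ := by
  rw [← Subgroup.index_eq_one]
  by_contra hne
  obtain ⟨p, hp, hdvd⟩ := Nat.exists_prime_and_dvd hne
  have := Fact.mk hp
  obtain ⟨S, hS⟩ := h p hp
  exact S.not_dvd_index (hdvd.trans (Subgroup.index_dvd_of_le hS))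

/-- A subgroup containing all elements of prime power order contains everything. -/
theorem Subgroup.le_of_forall_prime_pow_mem {G : Type*} [Group G] [Finite G] {T U : Subgroup G}
    (h : ∀ p : ℕ, p.Prime → ∀ x ∈ T, (∃ k, x ^ p ^ k = 1) → x ∈ U) : T ≤ U := by
  have : U.subgroupOf T = ⊤ := by
    refine Subgroup.eq_top_of_forall_exists_sylow_le _ fun p hp => ?_
    have := Fact.mk hp
    obtain ⟨S⟩ : Nonempty (Sylow p T) := inferInstance
    refine ⟨S, fun x hx => ?_⟩
    obtain ⟨k, hk⟩ := S.isPGroup'.exists_pow_pow_eq_one ⟨x, hx⟩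
    refine h p hp x x.2 ⟨k, ?_⟩
    simpa [Subtype.ext_iff] using hk
  exact Subgroup.subgroupOf_eq_top.mp this

theorem isPGroup_zpowers_of_pow_eq_one {G : Type*} [Group G] {p k : ℕ} {x : G}
    (hx : x ^ p ^ k = 1) : IsPGroup p (zpowers x) := by
  refine isPGroup_iff_pow_pow_eq_one.mpr fun ⟨y, hy⟩ => ⟨k, ?_⟩
  obtain ⟨n, rfl⟩ := mem_zpowers_iff.mp hy
  ext
  simp [← zpow_natCast, ← zpow_mul, mul_comm n]
  rw [zpow_mul]
  have := congrArg (· ^ n) hx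
  simpa [← zpow_natCast] using this

theorem eq_one_of_pow_eq_one_of_ne {G : Type*} [Group G] {p q i j : ℕ} (hp : p.Prime)
    (hq : q.Prime) (hpq : p ≠ q) {x : G} (hxp : x ^ p ^ i = 1) (hxq : x ^ q ^ j = 1) : x = 1 := by
  have h : Nat.Coprime (p ^ i) (q ^ j) := Nat.Coprime.pow _ _ ((Nat.coprime_primes hp hq).mpr hpq)
  rw [← orderOf_eq_one_iff, ← Nat.dvd_one, ← h.gcd_eq_one]
  exact Nat.dvd_gcd (orderOf_dvd_of_pow_eq_one hxp) (orderOf_dvd_of_pow_eq_one hxq)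

/-- If two elements of `p`-power order differ by an element of `q`-power order commuting with
one of them, then they are equal. -/
theorem eq_of_eq_mul_of_commute {G : Type*} [Group G] {p q : ℕ} (hp : p.Prime)
    (hq : q.Prime) (hpq : p ≠ q) {a b l : G} (ha : ∃ k, a ^ p ^ k = 1) (hb : ∃ k, b ^ p ^ k = 1)
    (hl : ∃ k, l ^ q ^ k = 1) (h : a = b * l) (hc : Commute b l) : a = b := by
  obtain ⟨i, ha⟩ := ha
  obtain ⟨j, hb⟩ := hb
  obtain ⟨k, hl⟩ := hl
  have hlp : l ^ p ^ (i + j) = 1 := by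
    have h1 : a ^ p ^ (i + j) = 1 := by rw [pow_add, pow_mul, ha, one_pow]
    have h2 : b ^ p ^ (i + j) = 1 := by rw [pow_add, mul_comm, pow_mul, hb, one_pow]
    rwa [h, hc.mul_pow, h2, one_mul] at h1
  rw [h, eq_one_of_pow_eq_one_of_ne hp hq hpq hlp hl, mul_one]

/-- In a finite nilpotent group, elements of coprime prime power orders commute. -/
theorem Group.IsNilpotent.commute_of_prime_pow {G : Type*} [Group G] [Finite G]
    [Group.IsNilpotent G] {p q : ℕ} (hp : p.Prime) (hq : q.Prime) (hpq : p ≠ q) {x y : G}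
    (hx : ∃ k, x ^ p ^ k = 1) (hy : ∃ k, y ^ q ^ k = 1) : Commute x y := by
  have := Fact.mk hp
  have := Fact.mk hq
  obtain ⟨i, hx⟩ := hx
  obtain ⟨j, hy⟩ := hy
  obtain ⟨P, hP⟩ := (isPGroup_zpowers_of_pow_eq_one hx).exists_le_sylow
  obtain ⟨Q, hQ⟩ := (isPGroup_zpowers_of_pow_eq_one hy).exists_le_sylow
  exact Subgroup.commute_of_normal_of_disjoint (P : Subgroup G) Q inferInstance inferInstance
    (IsPGroup.disjoint_of_ne p q hpq _ _ P.2 Q.2) x y (hP (mem_zpowers x)) (hQ (mem_zpowers y))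

theorem Set.mul_comm_of_normal {G : Type*} [Group G] (H N : Subgroup G) [N.Normal] :
    (H : Set G) * (N : Set G) = (N : Set G) * (H : Set G) := by
  rw [← Subgroup.mul_normal, ← Subgroup.normal_mul, sup_comm]

/-- If `HK = G` with `H` a `p`-group, then the index of `K` is a power of `p`. -/
theorem IsPGroup.index_eq_pow_of_mul_eq_univ {G : Type*} [Group G] [Finite G] {p : ℕ}
    [Fact p.Prime] {H K : Subgroup G} (hH : IsPGroup p H)
    (h : (H : Set G) * (K : Set G) = Set.univ) : ∃ n, K.index = p ^ n := by
  obtain ⟨n, hn⟩ := hH.card_orbit ((1 : G) : G ⧸ K)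
  refine ⟨n, ?_⟩
  have horb : MulAction.orbit H ((1 : G) : G ⧸ K) = Set.univ := by
    refine Set.eq_univ_of_forall fun y => ?_
    obtain ⟨g, rfl⟩ := QuotientGroup.mk_surjective y
    obtain ⟨a, ha, k, hk, rfl⟩ := Set.mem_mul.mp (h ▸ Set.mem_univ g)
    refine ⟨⟨a, ha⟩, ?_⟩
    change ((a * 1 : G) : G ⧸ K) = _
    rw [QuotientGroup.eq]
    simpa using hk
  rw [horb] at hn
  rw [← hn, Nat.card_univ]
  rfl

/-- A `p`-subgroup permuting with a Sylow `p`-subgroup is contained in it. -/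
theorem IsPGroup.le_sylow_of_mul_comm {G : Type*} [Group G] [Finite G] {p : ℕ}
    [Fact p.Prime] {H : Subgroup G} (hH : IsPGroup p H) (Q : Sylow p G)
    (h : (H : Set G) * ((Q : Subgroup G) : Set G) = ((Q : Subgroup G) : Set G) * (H : Set G)) :
    H ≤ Q := by
  let T : Subgroup G :=
    { carrier := (H : Set G) * ((Q : Subgroup G) : Set G)
      one_mem' := ⟨1, H.one_mem, 1, Q.one_mem, one_mul 1⟩
      mul_mem' := by
        rintro _ _ ⟨a, ha, b, hb, rfl⟩ ⟨c, hc, d, hd, rfl⟩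
        obtain ⟨e, he, f, hf, hef⟩ := Set.mem_mul.mp (h ▸ Set.mul_mem_mul hb hc)
        refine ⟨a * e, H.mul_mem ha he, f * d, Q.mul_mem hf hd, ?_⟩
        have hef : e * f = b * c := hef
        change a * e * (f * d) = a * b * (c * d)
        rw [mul_assoc, ← mul_assoc e, hef]; group
      inv_mem' := by
        rintro _ ⟨a, ha, b, hb, rfl⟩
        change (a * b)⁻¹ ∈ (H : Set G) * ((Q : Subgroup G) : Set G)
        rw [h, mul_inv_rev]
        exact Set.mul_mem_mul (Q.inv_mem hb) (H.inv_mem ha) }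
  have hHT : H ≤ T := fun x hx => ⟨x, hx, 1, Q.one_mem, mul_one x⟩
  have hQT : (Q : Subgroup G) ≤ T := fun x hx => ⟨1, H.one_mem, x, hx, one_mul x⟩
  have huniv : (H.subgroupOf T : Set T) * ((Q : Subgroup G).subgroupOf T : Set T) = Set.univ := by
    refine Set.eq_univ_of_forall fun ⟨x, hx⟩ => ?_
    obtain ⟨a, ha, b, hb, rfl⟩ := hx
    exact ⟨⟨a, hHT ha⟩, ha, ⟨b, hQT hb⟩, hb, rfl⟩
  obtain ⟨n, hn⟩ := (hH.comap_subtype (K := T)).index_eq_pow_of_mul_eq_univ huniv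
  have hn0 : n = 0 := by
    by_contra h0
    refine Q.not_dvd_index ((dvd_pow_self p h0).trans ?_)
    rw [← hn]
    exact Subgroup.relIndex_dvd_index_of_le hQT
  rw [hn0, pow_zero, Subgroup.index_eq_one, Subgroup.subgroupOf_eq_top] at hn
  exact hHT.trans hn

section SSPermutable

theorem IsSSPermutable.of_normal {G : Type*} [Group G] (N : Subgroup G) [N.Normal] :
    IsSSPermutable N :=
  ⟨⊤, Set.eq_univ_of_forall fun x => ⟨1, N.one_mem, x, mem_top x, one_mul x⟩,
    fun _ _ _ => (Set.mul_comm_of_normal _ N).symm⟩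

theorem IsSSPermutable.of_isNilpotent {G : Type*} [Group G] [Finite G] [Group.IsNilpotent G]
    (H : Subgroup G) : IsSSPermutable H := by
  refine ⟨⊤, Set.eq_univ_of_forall fun x => ⟨1, H.one_mem, x, mem_top x, one_mul x⟩,
    fun p _ P => ?_⟩
  have : (P.toSubgroup.map (⊤ : Subgroup G).subtype).Normal :=
    Subgroup.Normal.map inferInstance _ fun x => ⟨⟨x, mem_top x⟩, rfl⟩
  exact Set.mul_comm_of_normal _ _

theorem IsSSPermutable.map {G G' : Type*} [Group G] [Finite G] [Group G'] {f : G →* G'}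
    (hf : Function.Surjective f) {H : Subgroup G} (hH : IsSSPermutable H) :
    IsSSPermutable (H.map f) := by
  obtain ⟨K, hK, hP⟩ := hH
  refine ⟨K.map f, ?_, fun p _ P => ?_⟩
  · rw [coe_map, coe_map, ← Set.image_mul, hK, Set.image_univ, hf.range_eq]
  · obtain ⟨Q, rfl⟩ := Sylow.mapSurjective_surjective (f.subgroupMap_surjective K) p P
    have hQ : ((Q.mapSurjective (f.subgroupMap_surjective K)).toSubgroup.map (K.map f).subtype)
        = (Q.toSubgroup.map K.subtype).map f := by
      rw [Sylow.coe_mapSurjective, map_map, map_map]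
      rfl
    rw [hQ, coe_map, coe_map f, ← Set.image_mul, ← Set.image_mul, hP p Q]

theorem IsSSPermutable.comap {G G' : Type*} [Group G] [Finite G] [Group G'] {f : G →* G'}
    (hf : Function.Surjective f) {H : Subgroup G'} (hH : IsSSPermutable H) :
    IsSSPermutable (H.comap f) := by
  obtain ⟨K, hK, hP⟩ := hH
  refine ⟨K.comap f, ?_, fun p _ P => ?_⟩
  · refine Set.eq_univ_of_forall fun x => ?_
    obtain ⟨a, ha, b, hb, hab⟩ := Set.mem_mul.mp (hK ▸ Set.mem_univ (f x))
    obtain ⟨b, rfl⟩ := hf b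
    refine ⟨x * b⁻¹, ?_, b, hb, by simp⟩
    change f (x * b⁻¹) ∈ H
    rw [map_mul, ← hab]
    simpa using ha
  · have hfK : Function.Surjective (f.subgroupComap K) :=
      f.subgroupComap_surjective_of_surjective K hf
    have hPK := hP p (P.mapSurjective hfK)
    have hQ : ((P.mapSurjective hfK).toSubgroup.map K.subtype)
        = (P.toSubgroup.map (K.comap f).subtype).map f := by
      rw [Sylow.coe_mapSurjective, map_map, map_map]
      rfl
    rw [hQ] at hPK
    generalize P.toSubgroup.map (K.comap f).subtype = S at hPK
    ext x
    constructor
    · rintro ⟨a, ha, b, hb, rfl⟩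
      obtain ⟨_, ⟨c, hc, rfl⟩, d, hd, hcd⟩ := Set.mem_mul.mp
        (hPK ▸ Set.mul_mem_mul (a := f a) (b := f b) ha (mem_map_of_mem f hb))
      refine ⟨c, hc, c⁻¹ * (a * b), ?_, by simp⟩
      change f (c⁻¹ * (a * b)) ∈ H
      rw [map_mul, map_mul, ← hcd]
      simpa using hd
    · rintro ⟨a, ha, b, hb, rfl⟩
      obtain ⟨c, hc, _, ⟨d, hd, rfl⟩, hcd⟩ := Set.mem_mul.mp
        (hPK.symm ▸ Set.mul_mem_mul (a := f a) (b := f b) (mem_map_of_mem f ha) hb)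
      refine ⟨a * b * d⁻¹, ?_, d, hd, by simp⟩
      change f (a * b * d⁻¹) ∈ H
      rw [map_mul, map_mul, ← hcd]
      simpa using hc

theorem IsSSTGroup.of_surjective {G G' : Type*} [Group G] [Finite G] [Group G'] {f : G →* G'}
    (hf : Function.Surjective f) (hG : IsSSTGroup G) : IsSSTGroup G' := by
  intro H K hHK hH hK
  have h := hG (H.comap f) (K.comap f) (comap_mono hHK)
    (hH.comap (f.subgroupComap_surjective_of_surjective K hf)) (hK.comap hf)
  simpa [map_comap_eq_self_of_surjective hf] using h.map hf

/-- In an SST-group, elements of order prime to `p` normalize every subgroup of a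
normal `p`-subgroup. -/
theorem IsSSTGroup.conj_mem_of_le_normal {G : Type*} [Group G] [Finite G] (hG : IsSSTGroup G)
    {p q : ℕ} (hp : p.Prime) (hq : q.Prime) (hpq : p ≠ q) {P : Subgroup G} [P.Normal]
    (hP : IsPGroup p P) {H : Subgroup G} (hHP : H ≤ P) {x : G} (hx : ∃ k, x ^ q ^ k = 1)
    {h : G} (hh : h ∈ H) : x * h * x⁻¹ ∈ H := by
  have := Fact.mk hp
  have := Fact.mk hq
  have : Group.IsNilpotent P := hP.isNilpotent
  obtain ⟨K, hHK, hperm⟩ := hG H P hHP (.of_isNilpotent _) (.of_normal P)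
  obtain ⟨n, hn⟩ := (hP.to_le hHP).index_eq_pow_of_mul_eq_univ hHK
  obtain ⟨Q⟩ : Nonempty (Sylow q K) := inferInstance
  have hQpg : IsPGroup q (Q.toSubgroup.map K.subtype) := Q.2.map _
  have hindex : ¬ q ∣ (Q.toSubgroup.map K.subtype).index := by
    rw [index_map_subtype, hq.dvd_mul, hn]
    rintro (h | h)
    · exact Q.not_dvd_index h
    · exact hpq ((Nat.prime_dvd_prime_iff_eq hq hp).mp (hq.dvd_of_dvd_pow h)).symm
  obtain ⟨k, hx⟩ := hx
  obtain ⟨R, hR⟩ := (isPGroup_zpowers_of_pow_eq_one hx).exists_le_sylow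
  obtain ⟨g, rfl⟩ := MulAction.exists_smul_eq G (hQpg.toSylow hindex) R
  have hxg : g⁻¹ * x * g ∈ Q.toSubgroup.map K.subtype := by
    have := hR (mem_zpowers x)
    rw [Sylow.coe_subgroup_smul, Subgroup.mem_pointwise_smul_iff_inv_smul_mem] at this
    simpa [MulAut.smul_def, ← map_inv] using this
  obtain ⟨a, ha, c, hc, rfl⟩ := Set.mem_mul.mp (hHK ▸ Set.mem_univ g)
  obtain ⟨y, hy, hyx⟩ := hxg
  -- conjugate the Sylow subgroup of `K` by `c`
  let Q' : Sylow q K := (⟨c, hc⟩ : K) • Q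
  set y' : K := ⟨c, hc⟩ * y * ⟨c, hc⟩⁻¹ with hy'
  have hyQ' : y' ∈ Q' := by
    change y' ∈ Q'.toSubgroup
    rw [Sylow.coe_subgroup_smul, Subgroup.mem_pointwise_smul_iff_inv_smul_mem]
    simp only [MulAut.smul_def, ← map_inv, hy', MulAut.conj_apply]
    have hy1 : y ∈ Q.toSubgroup := hy
    convert hy1 using 1
    group
  have hxy : x = a * y' * a⁻¹ := by
    have : (y : G) = (a * c)⁻¹ * x * (a * c) := hyx
    simp only [hy', Subgroup.coe_mul, InvMemClass.coe_inv, this]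
    group
  have key : ∀ b ∈ H, (y' : G) * b * (y' : G)⁻¹ ∈ H := by
    intro b hb
    have hmem : (y' : G) * b ∈ (H : Set G) * (Q'.toSubgroup.map K.subtype : Subgroup G) := by
      rw [hperm q Q']
      exact Set.mul_mem_mul (mem_map_of_mem K.subtype hyQ') hb
    obtain ⟨d, hd, _, ⟨e, he, rfl⟩, hde⟩ := hmem
    have hde : d * (e : G) = y' * b := hde
    have heq : (e : G) * (y' : G)⁻¹ = d⁻¹ * (y' * b * (y' : G)⁻¹) := by
      rw [← hde]; group
    have hmemP : (e : G) * (y' : G)⁻¹ ∈ P := by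
      rw [heq]
      exact P.mul_mem (P.inv_mem (hHP hd)) (Normal.conj_mem ‹_› _ (hHP hb) _)
    have h1 : (e : G) * (y' : G)⁻¹ = 1 := by
      obtain ⟨i, hi⟩ := hP.exists_pow_pow_eq_one ⟨_, hmemP⟩
      obtain ⟨j, hj⟩ := Q'.2.exists_pow_pow_eq_one ⟨e * y'⁻¹, Q'.mul_mem he (Q'.inv_mem hyQ')⟩
      refine eq_one_of_pow_eq_one_of_ne (i := i) (j := j) hp hq hpq ?_ ?_
      · simpa [Subtype.ext_iff] using hi
      · simpa [Subtype.ext_iff] using hj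
    rw [h1, eq_comm, inv_mul_eq_one] at heq
    rwa [← heq]
  have : x * h * x⁻¹ = a * (y' * (a⁻¹ * h * a) * (y' : G)⁻¹) * a⁻¹ := by
    rw [hxy]; group
  rw [this]
  exact H.mul_mem (H.mul_mem ha (key _ (H.mul_mem (H.mul_mem (H.inv_mem ha) hh) ha)))
    (H.inv_mem ha)

end SSPermutable

section PowerAutomorphism

variable {G : Type*} [Group G] {p q : ℕ}

/-- If `x` of order prime to `p` sends `g` of `p`-power order to `g ^ i` with `i ≡ 1 mod p`,
then `x` commutes with `g`. -/
theorem commute_of_conj_eq_zpow (hp : p.Prime) (hq : q.Prime) (hpq : p ≠ q) {x g : G}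
    (hx : ∃ k, x ^ q ^ k = 1) (hg : ∃ k, g ^ p ^ k = 1) {i : ℤ} (hi : (p : ℤ) ∣ i - 1)
    (h : x * g * x⁻¹ = g ^ i) : Commute x g := by
  obtain ⟨a, hx⟩ := hx
  obtain ⟨b, hg⟩ := hg
  have hpow : ∀ n : ℕ, x ^ n * g * (x ^ n)⁻¹ = g ^ (i ^ n) := by
    intro n
    induction n with
    | zero => simp
    | succ n ih =>
      calc x ^ (n + 1) * g * (x ^ (n + 1))⁻¹ = x * (x ^ n * g * (x ^ n)⁻¹) * x⁻¹ := by
            rw [pow_succ']; group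
        _ = (x * g * x⁻¹) ^ (i ^ n) := by rw [ih, conj_zpow]
        _ = g ^ (i ^ (n + 1)) := by rw [h, ← zpow_mul, pow_succ']
  have hdvd : ((p ^ b : ℕ) : ℤ) ∣ i ^ p ^ b - 1 := by
    have h1 := dvd_sub_pow_of_dvd_sub (R := ℤ) (p := p) (a := i) (b := 1) hi b
    rw [one_pow] at h1
    refine dvd_trans ?_ h1
    push_cast
    exact pow_dvd_pow _ (Nat.le_succ b)
  have hcomm : Commute (x ^ p ^ b) g := by
    obtain ⟨c, hc⟩ := hdvd
    have h2 := hpow (p ^ b)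
    rw [eq_add_of_sub_eq hc, zpow_add, zpow_mul, zpow_natCast, hg, one_zpow, one_mul,
      zpow_one] at h2
    exact mul_inv_eq_iff_eq_mul.mp h2
  have hcop : Nat.Coprime (p ^ b) (q ^ a) :=
    Nat.Coprime.pow _ _ ((Nat.coprime_primes hp hq).mpr hpq)
  have hcop' : (p ^ b).Coprime (orderOf x) :=
    Nat.Coprime.coprime_dvd_right (orderOf_dvd_of_pow_eq_one hx) hcop
  obtain ⟨m, hm⟩ := exists_pow_eq_self_of_coprime hcop'
  rw [← hm]
  exact hcomm.pow_left m

variable {P : Subgroup G} {x : G}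

theorem exists_conj_eq_zpow (hinv : ∀ H ≤ P, ∀ h ∈ H, x * h * x⁻¹ ∈ H) {g : G} (hg : g ∈ P) :
    ∃ i : ℤ, x * g * x⁻¹ = g ^ i := by
  obtain ⟨i, hi⟩ := mem_zpowers_iff.mp
    (hinv (zpowers g) ((zpowers_le).mpr hg) g (mem_zpowers g))
  exact ⟨i, hi.symm⟩

theorem IsPGroup.exists_zpow_orderOf_eq (hp : p.Prime) {g : G} (hg : ∃ k, g ^ p ^ k = 1)
    (h1 : g ≠ 1) : ∃ n : ℕ, orderOf (g ^ n) = p := by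
  have := Fact.mk hp
  obtain ⟨k, hk⟩ := hg
  have hfin : IsOfFinOrder g := isOfFinOrder_iff_pow_eq_one.mpr ⟨_, pow_pos hp.pos k, hk⟩
  obtain ⟨j, -, hj⟩ := (Nat.dvd_prime_pow hp).mp (orderOf_dvd_of_pow_eq_one hk)
  obtain ⟨c, hc⟩ : p ∣ orderOf g := by
    rw [hj]
    refine dvd_pow_self p fun h0 => h1 ?_
    rwa [h0, pow_zero, orderOf_eq_one_iff] at hj
  refine ⟨c, ?_⟩
  have hc0 : c ≠ 0 := by
    rintro rfl
    exact hfin.orderOf_pos.ne' (by simpa using hc)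
  rw [orderOf_pow_of_dvd hc0 ⟨p, by rw [hc, mul_comm]⟩, hc,
    Nat.mul_div_cancel _ (Nat.pos_of_ne_zero hc0)]

/-- If `x` commutes with a nontrivial power of `g`, it commutes with `g`. -/
theorem commute_of_commute_zpow (hp : p.Prime) (hq : q.Prime) (hpq : p ≠ q)
    (hP : IsPGroup p P) (hx : ∃ k, x ^ q ^ k = 1) (hinv : ∀ H ≤ P, ∀ h ∈ H, x * h * x⁻¹ ∈ H)
    {g : G} (hg : g ∈ P) {m : ℤ} (hm : g ^ m ≠ 1) (hc : Commute x (g ^ m)) : Commute x g := by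
  have hPp : ∀ g ∈ P, ∃ k, g ^ p ^ k = 1 := fun g hg => by
    simpa [Subtype.ext_iff] using hP.exists_pow_pow_eq_one ⟨g, hg⟩
  obtain ⟨n, hn⟩ := IsPGroup.exists_zpow_orderOf_eq hp (hPp _ (P.zpow_mem hg m)) hm
  obtain ⟨i, hi⟩ := exists_conj_eq_zpow hinv hg
  refine commute_of_conj_eq_zpow hp hq hpq hx (hPp g hg) (i := i) ?_ hi
  have h1 : x * (g ^ m) ^ n * x⁻¹ = (g ^ m) ^ n := by
    rw [(hc.pow_right n).eq, mul_inv_cancel_right]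
  have h2 : x * (g ^ m) ^ n * x⁻¹ = ((g ^ m) ^ n) ^ i := by
    rw [← zpow_natCast, ← zpow_mul, ← conj_zpow, hi, ← zpow_mul, ← zpow_mul, mul_comm]
  rw [← hn, orderOf_dvd_iff_zpow_eq_one, zpow_sub_one, ← h2, h1, mul_inv_cancel]

/-- If `x` commutes with `u` of order `p`, it commutes with everything commuting with `u`. -/
theorem commute_of_commute_orderOf_eq (hp : p.Prime) (hq : q.Prime) (hpq : p ≠ q)
    (hP : IsPGroup p P) (hx : ∃ k, x ^ q ^ k = 1) (hinv : ∀ H ≤ P, ∀ h ∈ H, x * h * x⁻¹ ∈ H)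
    {u v : G} (hu : u ∈ P) (hv : v ∈ P) (hup : orderOf u = p) (huv : Commute u v)
    (hxu : Commute x u) : Commute x v := by
  obtain ⟨n, hn⟩ := exists_conj_eq_zpow hinv hv
  obtain ⟨m, hm⟩ := exists_conj_eq_zpow hinv (P.mul_mem hu hv)
  have h1 : u * v ^ n = u ^ m * v ^ m := by
    rw [← huv.mul_zpow, ← hm, ← hn]
    calc u * (x * v * x⁻¹) = (u * x) * v * x⁻¹ := by group
      _ = x * (u * v) * x⁻¹ := by rw [← hxu.eq]; group
  have h2 : v ^ (n - m) = u ^ (m - 1) := by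
    have h3 : u ^ (m - 1) = u⁻¹ * u ^ m := by rw [sub_eq_neg_add, zpow_add, zpow_neg_one]
    rw [h3, zpow_sub, eq_comm, eq_mul_inv_iff_mul_eq, mul_assoc, ← h1, inv_mul_cancel_left]
  by_cases hum : u ^ (m - 1) = 1
  · refine commute_of_conj_eq_zpow hp hq hpq hx ?_ (i := m) ?_ ?_
    · simpa [Subtype.ext_iff] using hP.exists_pow_pow_eq_one ⟨v, hv⟩
    · rw [← hup, orderOf_dvd_iff_zpow_eq_one, hum]
    · rw [hum, zpow_sub, mul_inv_eq_one] at h2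
      rw [hn, h2]
  · refine commute_of_commute_zpow hp hq hpq hP hx hinv hv (m := n - m) ?_ ?_
    · rwa [h2]
    · rw [h2]
      exact hxu.zpow_right _

variable [Finite G]

/-- A nontrivial power automorphism of order prime to `p` on a `p`-group has no fixed points. -/
theorem eq_one_of_commute_of_not_commute (hp : p.Prime) (hq : q.Prime) (hpq : p ≠ q)
    (hP : IsPGroup p P) (hx : ∃ k, x ^ q ^ k = 1) (hinv : ∀ H ≤ P, ∀ h ∈ H, x * h * x⁻¹ ∈ H)
    {k : G} (hk : k ∈ P) (hxk : ¬ Commute x k) {c : G} (hc : c ∈ P) (hxc : Commute x c) :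
    c = 1 := by
  have := Fact.mk hp
  by_contra hc1
  have hPp : ∀ g ∈ P, ∃ k, g ^ p ^ k = 1 := fun g hg => by
    simpa [Subtype.ext_iff] using hP.exists_pow_pow_eq_one ⟨g, hg⟩
  have : Nontrivial P := ⟨⟨c, hc⟩, 1, fun h => hc1 (congrArg Subtype.val h)⟩
  obtain ⟨⟨z, hz⟩, hz1⟩ := @exists_ne (center P) hP.center_nontrivial 1
  have hz1 : (z : G) ≠ 1 := fun h => hz1 (Subtype.ext (Subtype.ext h))
  obtain ⟨n, hn⟩ := IsPGroup.exists_zpow_orderOf_eq hp (hPp z z.2) hz1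
  have hcen : ∀ v ∈ P, Commute ((z : G) ^ n) v := fun v hv =>
    Commute.pow_left (congrArg Subtype.val (mem_center_iff.mp hz ⟨v, hv⟩)).symm n
  obtain ⟨j, hj⟩ := IsPGroup.exists_zpow_orderOf_eq hp (hPp c hc) hc1
  have hzP : (z : G) ^ n ∈ P := P.pow_mem z.2 n
  have hcP : c ^ j ∈ P := P.pow_mem hc j
  have hxz : Commute x ((z : G) ^ n) :=
    commute_of_commute_orderOf_eq hp hq hpq hP hx hinv hcP hzP hj (hcen _ hcP).symm
      (hxc.pow_right j)
  exact hxk (commute_of_commute_orderOf_eq hp hq hpq hP hx hinv hzP hk hn (hcen _ hk) hxz)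

/-- If a power automorphism of order prime to `p` is nontrivial on a `p`-group, then
every element of the `p`-group is a commutator with it. -/
theorem exists_eq_inv_mul_conj (hp : p.Prime) (hq : q.Prime) (hpq : p ≠ q)
    (hP : IsPGroup p P) (hx : ∃ k, x ^ q ^ k = 1) (hinv : ∀ H ≤ P, ∀ h ∈ H, x * h * x⁻¹ ∈ H)
    {k : G} (hk : k ∈ P) (hxk : ¬ Commute x k) {h : G} (hh : h ∈ P) :
    ∃ a ∈ P, a⁻¹ * (x * a * x⁻¹) = h := by
  let f : P → P := fun a => ⟨(a : G)⁻¹ * (x * a * x⁻¹),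
    P.mul_mem (P.inv_mem a.2) (hinv P le_rfl a a.2)⟩
  have hf : Function.Injective f := by
    rintro ⟨a, ha⟩ ⟨b, hb⟩ hab
    have hab : a⁻¹ * (x * a * x⁻¹) = b⁻¹ * (x * b * x⁻¹) := congrArg Subtype.val hab
    have hcomm : Commute x (b * a⁻¹) := by
      have h3 : b * a⁻¹ = x * (b * a⁻¹) * x⁻¹ := by
        calc b * a⁻¹ = b * (a⁻¹ * (x * a * x⁻¹)) * (x * a⁻¹ * x⁻¹) := by group
          _ = x * (b * a⁻¹) * x⁻¹ := by rw [hab]; group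
      exact (mul_inv_eq_iff_eq_mul.mp h3.symm)
    have := eq_one_of_commute_of_not_commute hp hq hpq hP hx hinv hk hxk
      (P.mul_mem hb (P.inv_mem ha)) hcomm
    exact Subtype.ext (mul_inv_eq_one.mp this).symm
  obtain ⟨a, ha⟩ := Finite.surjective_of_injective hf ⟨h, hh⟩
  exact ⟨a, a.2, congrArg Subtype.val ha⟩

/-- A `p`-group with a nontrivial power automorphism of order prime to `p` is abelian. -/
theorem commute_of_not_commute_conj (hp : p.Prime) (hq : q.Prime) (hpq : p ≠ q)
    (hP : IsPGroup p P) (hx : ∃ k, x ^ q ^ k = 1) (hinv : ∀ H ≤ P, ∀ h ∈ H, x * h * x⁻¹ ∈ H)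
    {k : G} (hk : k ∈ P) (hxk : ¬ Commute x k) {g h : G} (hg : g ∈ P) (hh : h ∈ P) :
    Commute g h := by
  have hinv' : ∀ H ≤ P, ∀ h ∈ H, x⁻¹ * h * x ∈ H := by
    intro H hHP h hh
    let f : H → H := fun a => ⟨x * a * x⁻¹, hinv H hHP a a.2⟩
    have hf : Function.Injective f := fun a b hab => by
      have : x * a * x⁻¹ = x * b * x⁻¹ := congrArg Subtype.val hab
      exact Subtype.ext (mul_left_cancel (mul_right_cancel this))
    obtain ⟨a, ha⟩ := Finite.surjective_of_injective hf ⟨h, hh⟩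
    have ha : x * a * x⁻¹ = h := congrArg Subtype.val ha
    rw [← ha]
    simp [mul_assoc]
  have hded : ∀ h ∈ P, ∀ g ∈ P, ∃ i : ℤ, h * g * h⁻¹ = g ^ i := by
    intro h hh g hg
    obtain ⟨a, ha, rfl⟩ := exists_eq_inv_mul_conj hp hq hpq hP hx hinv hk hxk hh
    obtain ⟨i, hi⟩ := mem_zpowers_iff.mp
      (hinv' (zpowers g) ((zpowers_le).mpr hg) g (mem_zpowers g))
    obtain ⟨j, hj⟩ := exists_conj_eq_zpow hinv (P.mul_mem (P.mul_mem ha hg) (P.inv_mem ha))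
    refine ⟨j * i, ?_⟩
    calc a⁻¹ * (x * a * x⁻¹) * g * (a⁻¹ * (x * a * x⁻¹))⁻¹
        = a⁻¹ * (x * (a * (x⁻¹ * g * x) * a⁻¹) * x⁻¹) * a := by group
      _ = a⁻¹ * (x * (a * g * a⁻¹) * x⁻¹) ^ i * a := by rw [← hi, ← conj_zpow, ← conj_zpow]
      _ = a⁻¹ * (a * g ^ (j * i) * a⁻¹) * a := by rw [hj, ← zpow_mul, conj_zpow]
      _ = g ^ (j * i) := by group
  obtain ⟨a, ha, rfl⟩ := exists_eq_inv_mul_conj hp hq hpq hP hx hinv hk hxk hh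
  have hswap : ∀ b ∈ P, x * (a * b * a⁻¹) * x⁻¹ = a * (x * b * x⁻¹) * a⁻¹ := by
    intro b hb
    obtain ⟨i, hi⟩ := hded a ha b hb
    obtain ⟨j, hj⟩ := exists_conj_eq_zpow hinv hb
    rw [hi, hj, ← conj_zpow, ← conj_zpow, hi, hj, ← zpow_mul, ← zpow_mul, mul_comm]
  have h1 := hswap (x⁻¹ * g * x) (hinv' P le_rfl g hg)
  have h2 : (x * a * x⁻¹) * g * (x * a * x⁻¹)⁻¹ = a * g * a⁻¹ := by
    calc _ = x * (a * (x⁻¹ * g * x) * a⁻¹) * x⁻¹ := by group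
      _ = _ := by rw [h1]; group
  have h3 : (a⁻¹ * (x * a * x⁻¹)) * g * (a⁻¹ * (x * a * x⁻¹))⁻¹ = g := by
    calc _ = a⁻¹ * ((x * a * x⁻¹) * g * (x * a * x⁻¹)⁻¹) * a := by group
      _ = _ := by rw [h2]; group
  exact (mul_inv_eq_iff_eq_mul.mp h3).symm

end PowerAutomorphism

section Structure

theorem Sylow.normal_map_subtype {G : Type*} [Group G] [Finite G] {A : Subgroup G} [A.Normal]
    [Group.IsNilpotent A] {p : ℕ} [Fact p.Prime] (S : Sylow p A) :
    (S.toSubgroup.map A.subtype).Normal := by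
  have : S.toSubgroup.Characteristic := S.characteristic_of_normal inferInstance
  infer_instance

theorem Subgroup.mem_normalizer_of_forall_conj_mem {G : Type*} [Group G] [Finite G]
    {H : Subgroup G} {x : G} (hx : ∀ h ∈ H, x * h * x⁻¹ ∈ H) :
    x ∈ normalizer (H : Set G) := by
  rw [mem_normalizer_iff_map_conj_eq]
  refine eq_of_le_of_card_ge (map_le_iff_le_comap.mpr fun h hh => ?_) ?_
  · exact hx h hh
  · rw [card_map_of_injective (MulAut.conj x).injective]

theorem Group.IsSolvable.exists_normal_isPGroup (G : Type*) [Group G] [Finite G] [Group.IsSolvable G]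
    [Nontrivial G] : ∃ (p : ℕ) (P : Subgroup G), p.Prime ∧ P.Normal ∧ IsPGroup p P ∧ P ≠ ⊥ := by
  classical
  have hex : ∃ n, derivedSeries G n = ⊥ := Group.IsSolvable.solvable
  obtain ⟨m, hm⟩ : ∃ m, Nat.find hex = m + 1 := by
    refine Nat.exists_eq_succ_of_ne_zero fun h0 => ?_
    have := Nat.find_spec hex
    rw [h0, derivedSeries_zero] at this
    exact top_ne_bot this
  have hne : derivedSeries G m ≠ ⊥ := Nat.find_min hex (by omega)
  have hcomm : ⁅derivedSeries G m, derivedSeries G m⁆ = ⊥ := by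
    rw [← derivedSeries_succ, ← hm]
    exact Nat.find_spec hex
  have hnormal : (derivedSeries G m).Normal := inferInstance
  generalize derivedSeries G m = A at hne hcomm hnormal
  rw [commutator_eq_bot_iff_le_centralizer] at hcomm
  have : IsMulCommutative A :=
    ⟨⟨fun a b => Subtype.ext (mem_centralizer_iff.mp (hcomm b.2) a a.2)⟩⟩
  have hnil : Group.IsNilpotent A :=
    Subgroup.isNilpotent_of_ker_le_center (1 : A →* Unit) fun a _ =>
      mem_center_iff.mpr fun b => mul_comm' b a
  have hcard : Nat.card A ≠ 1 := fun h => hne (A.eq_bot_of_card_eq h)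
  obtain ⟨p, hp, hdvd⟩ := Nat.exists_prime_and_dvd hcard
  have := Fact.mk hp
  obtain ⟨S⟩ : Nonempty (Sylow p A) := inferInstance
  refine ⟨p, S.toSubgroup.map A.subtype, hp, S.normal_map_subtype, S.2.map _, fun h => ?_⟩
  rw [map_eq_bot_iff_of_injective _ A.subtype_injective] at h
  exact S.ne_bot_of_dvd_card hdvd h

/-- A nontrivial solvable SST-group has a nontrivial cyclic normal subgroup. -/
theorem IsSSTGroup.exists_normal_zpowers {G : Type*} [Group G] [Finite G] [Group.IsSolvable G]
    [Nontrivial G] (hG : IsSSTGroup G) : ∃ z : G, z ≠ 1 ∧ (zpowers z).Normal := by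
  obtain ⟨p, P, hp, hPn, hP, hne⟩ := Group.IsSolvable.exists_normal_isPGroup G
  have := Fact.mk hp
  obtain ⟨S⟩ : Nonempty (Sylow p G) := inferInstance
  let : MulAction S P := MulAction.compHom P ((MulAut.conjNormal (H := P)).comp S.toSubgroup.subtype)
  have hcard : p ∣ Nat.card P := by
    refine hP.card_eq_or_dvd.resolve_left fun h => hne (P.eq_bot_of_card_eq h)
  have hsmul : ∀ (s : S) (a : P), ((s • a : P) : G) = s * a * (s : G)⁻¹ := fun s a =>
    MulAut.conjNormal_apply _ _
  have h1 : (1 : P) ∈ MulAction.fixedPoints S P := fun s => Subtype.ext (by simp [hsmul])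
  obtain ⟨z, hz, hz1⟩ := S.2.exists_fixed_point_of_prime_dvd_card_of_fixed_point P hcard h1
  refine ⟨z, fun h => hz1 (Subtype.ext h.symm), ?_⟩
  rw [← normalizer_eq_top_iff]
  refine Subgroup.eq_top_of_forall_exists_sylow_le _ fun q hq => ?_
  have := Fact.mk hq
  have hnorm : ∀ x : G, (∀ h ∈ zpowers (z : G), x * h * x⁻¹ ∈ zpowers (z : G)) →
      x ∈ normalizer (zpowers (z : G) : Set G) := fun x hx =>
    mem_normalizer_of_forall_conj_mem hx
  by_cases hpq : p = q
  · subst hpq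
    refine ⟨S, fun x hx => hnorm x fun h hh => ?_⟩
    obtain ⟨n, rfl⟩ := mem_zpowers_iff.mp hh
    have hfix : x * z * x⁻¹ = z := by
      rw [← hsmul ⟨x, hx⟩ z, hz ⟨x, hx⟩]
    rw [← conj_zpow, hfix]
    exact zpow_mem (mem_zpowers _) n
  · obtain ⟨Q⟩ : Nonempty (Sylow q G) := inferInstance
    refine ⟨Q, fun x hx => hnorm x fun h hh => ?_⟩
    refine hG.conj_mem_of_le_normal hp hq hpq hP (zpowers_le.mpr z.2) ?_ hh
    simpa [Subtype.ext_iff] using Q.2.exists_pow_pow_eq_one ⟨x, hx⟩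

theorem IsSSTGroup.isNilpotent_commutator {G : Type*} [Group G] [Finite G] [Group.IsSolvable G]
    (hG : IsSSTGroup G) : Group.IsNilpotent (commutator G) := by
  induction hn : Nat.card G using Nat.strong_induction_on generalizing G with
  | _ n ih =>
  rcases subsingleton_or_nontrivial G with hs | hs
  · infer_instance
  obtain ⟨z, hz1, hz⟩ := hG.exists_normal_zpowers
  have hlt : Nat.card (G ⧸ zpowers z) < n := by
    rw [← hn, ← (zpowers z).card_mul_index, ← index_eq_card]
    refine lt_mul_of_one_lt_left (Nat.pos_of_ne_zero index_ne_zero_of_finite) ?_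
    rw [one_lt_card_iff_ne_bot]
    simpa using hz1
  have hnil := ih _ hlt (hG.of_surjective (QuotientGroup.mk'_surjective (zpowers z))) rfl
  have hmap : ∀ x : commutator G, QuotientGroup.mk' (zpowers z) x ∈ commutator (G ⧸ zpowers z) := by
    intro x
    have := mem_map_of_mem (QuotientGroup.mk' (zpowers z)) x.2
    generalize (x : G) = y at this
    rw [commutator_def, map_commutator] at this
    exact commutator_mono le_top le_top this
  let f : commutator G →* commutator (G ⧸ zpowers z) :=
    ((QuotientGroup.mk' (zpowers z)).comp (commutator G).subtype).codRestrict _ hmap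
  refine Subgroup.isNilpotent_of_ker_le_center f fun x hx => ?_
  have hxz : (x : G) ∈ zpowers z := by
    rw [← QuotientGroup.eq_one_iff]
    exact congrArg Subtype.val hx
  have hcz : commutator G ≤ centralizer {z} := by
    rw [commutator_def, commutator_le]
    intro a _ b _
    rw [mem_centralizer_singleton_iff]
    have hconj : ∀ g : G, ∃ i : ℤ, g * z * g⁻¹ = z ^ i := fun g => by
      obtain ⟨i, hi⟩ := mem_zpowers_iff.mp (hz.conj_mem z (mem_zpowers z) g)
      exact ⟨i, hi.symm⟩
    obtain ⟨i, hi⟩ := hconj a⁻¹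
    obtain ⟨j, hj⟩ := hconj b⁻¹
    have hab : a⁻¹ * (b⁻¹ * z * b⁻¹⁻¹) * a⁻¹⁻¹ = b⁻¹ * (a⁻¹ * z * a⁻¹⁻¹) * b⁻¹⁻¹ := by
      rw [hi, hj, ← conj_zpow, ← conj_zpow, hi, hj, ← zpow_mul, ← zpow_mul, mul_comm]
    rw [commutatorElement_def]
    calc a * b * a⁻¹ * b⁻¹ * z
        = a * b * (a⁻¹ * (b⁻¹ * z * b⁻¹⁻¹) * a⁻¹⁻¹) * a⁻¹ * b⁻¹ := by group
      _ = z * (a * b * a⁻¹ * b⁻¹) := by rw [hab]; group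
  obtain ⟨n, hn⟩ := mem_zpowers_iff.mp hxz
  refine mem_center_iff.mpr fun y => Subtype.ext ?_
  change (y : G) * x = x * y
  rw [← hn]
  exact (Commute.zpow_right (mem_centralizer_singleton_iff.mp (hcz y.2)) n)

theorem IsNilpotentResidual.le_ker {G X : Type*} [Group G] [Group X] {L : Subgroup G}
    (hL : IsNilpotentResidual L) [Group.IsNilpotent X] {f : G →* X}
    (hf : Function.Surjective f) : L ≤ f.ker := by
  have := hL.1
  exact hL.2.2 f.ker
    (Group.nilpotent_of_mulEquiv (QuotientGroup.quotientKerEquivOfSurjective f hf).symm)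

theorem IsNilpotentResidual.map_mk {G : Type*} [Group G] {L : Subgroup G}
    (hL : IsNilpotentResidual L) (N : Subgroup G) [N.Normal] :
    IsNilpotentResidual (L.map (QuotientGroup.mk' N)) := by
  have := hL.1
  have hn := hL.2.1
  refine ⟨this.map _ (QuotientGroup.mk'_surjective N), fun {_} => ⟨?_, fun M hM hMn => ?_⟩⟩
  · refine Group.nilpotent_of_surjective (QuotientGroup.map L (L.map (QuotientGroup.mk' N))
      (QuotientGroup.mk' N) (le_comap_map _ _)) ?_
    exact QuotientGroup.map_surjective_of_surjective _ _ _
      ((QuotientGroup.mk'_surjective _).comp (QuotientGroup.mk'_surjective N)) _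
  · rw [map_le_iff_le_comap]
    have := hL.le_ker (f := (QuotientGroup.mk' M).comp (QuotientGroup.mk' N))
      ((QuotientGroup.mk'_surjective _).comp (QuotientGroup.mk'_surjective N))
    rwa [← MonoidHom.comap_ker, QuotientGroup.ker_mk'] at this

theorem IsNilpotentResidual.eq_bot {G : Type*} [Group G] {L : Subgroup G}
    (hL : IsNilpotentResidual L) [Group.IsNilpotent G] : L = ⊥ := by
  simpa using hL.le_ker (f := MonoidHom.id G) Function.surjective_id

theorem IsNilpotentResidual.isNilpotent {G : Type*} [Group G] [Finite G] [Group.IsSolvable G]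
    (hG : IsSSTGroup G) {L : Subgroup G} (hL : IsNilpotentResidual L) : Group.IsNilpotent L := by
  have hnil := hG.isNilpotent_commutator
  have hle : L ≤ commutator G := by
    have := hL.le_ker (X := Abelianization G) (f := Abelianization.of)
      (QuotientGroup.mk'_surjective _)
    rwa [Abelianization.ker_of] at this
  exact Subgroup.isNilpotent_of_ker_le_center (inclusion hle)
    (by rw [(MonoidHom.ker_eq_bot_iff _).mpr (inclusion_injective hle)]; exact bot_le)

theorem Sylow.exists_pow_eq_one {G : Type*} [Group G] {p : ℕ} (S : Sylow p G) {x : G}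
    (hx : x ∈ S) : ∃ k, x ^ p ^ k = 1 := by
  simpa [Subtype.ext_iff] using S.2.exists_pow_pow_eq_one ⟨x, hx⟩

/-- A Sylow subgroup is normal modulo a normal subgroup with nilpotent quotient. -/
theorem Sylow.exists_conj_eq_mul {G : Type*} [Group G] [Finite G] {L : Subgroup G} [L.Normal]
    [Group.IsNilpotent (G ⧸ L)] {p : ℕ} [Fact p.Prime] (S : Sylow p G) {y : G} (hy : y ∈ S)
    (g : G) : ∃ y' ∈ S, ∃ l ∈ L, g * y * g⁻¹ = y' * l := by
  let S' := S.mapSurjective (QuotientGroup.mk'_surjective L)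
  have hS' : S'.toSubgroup.Normal := inferInstance
  have hmem : QuotientGroup.mk' L y ∈ S'.toSubgroup := mem_map_of_mem _ hy
  obtain ⟨y', hy', heq⟩ := hS'.conj_mem _ hmem (QuotientGroup.mk' L g)
  refine ⟨y', hy', y'⁻¹ * (g * y * g⁻¹), ?_, by group⟩
  rw [← map_inv, ← map_mul, ← map_mul] at heq
  exact QuotientGroup.eq.mp heq

/-- If the nilpotent residual of an SST-group is a nontrivial `p`-group, it is a Sylow subgroup
all of whose subgroups are normal. -/
theorem IsSSTGroup.residual_of_isPGroup {G : Type*} [Group G] [Finite G]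
    (hG : IsSSTGroup G) {L : Subgroup G} (hL : IsNilpotentResidual L) {p : ℕ} (hp : p.Prime)
    (hLp : IsPGroup p L) (hne : L ≠ ⊥) :
    ¬ p ∣ L.index ∧ ∀ H ≤ L, H.Normal := by
  have := Fact.mk hp
  have hLn := hL.1
  have hnil : Group.IsNilpotent (G ⧸ L) := hL.2.1
  obtain ⟨P⟩ : Nonempty (Sylow p G) := inferInstance
  have hLP : L ≤ P := hLp.le_sylow_of_normal P
  have hPn : P.toSubgroup.Normal := ⟨fun y hy g => by
    obtain ⟨y', hy', l, hl, h⟩ := P.exists_conj_eq_mul (L := L) hy g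
    rw [h]
    exact P.mul_mem hy' (hLP hl)⟩
  have hLpow : ∀ l ∈ L, ∃ k, l ^ p ^ k = 1 := fun l hl => P.exists_pow_eq_one (hLP hl)
  have hinv : ∀ q : ℕ, q.Prime → p ≠ q → ∀ x : G, (∃ k, x ^ q ^ k = 1) →
      ∀ H ≤ P.toSubgroup, ∀ h ∈ H, x * h * x⁻¹ ∈ H := fun q hq hpq x hx H hH h hh =>
    hG.conj_mem_of_le_normal hp hq hpq P.2 hH hx hh
  obtain ⟨q, hq, hpq, x, hx, k, hk, hxk⟩ : ∃ q : ℕ, q.Prime ∧ p ≠ q ∧ ∃ x : G,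
      (∃ k, x ^ q ^ k = 1) ∧ ∃ k ∈ P.toSubgroup, ¬ Commute x k := by
    by_contra! hcomm
    refine hne (@IsNilpotentResidual.eq_bot _ _ _ hL ?_)
    refine (Group.isNilpotent_of_finite_tfae.out 0 3).mpr fun q hq Q => ?_
    have : Fact q.Prime := hq
    by_cases hpq : p = q
    · subst hpq
      obtain rfl : P = Q := Sylow.ext (by
        obtain ⟨g, rfl⟩ := MulAction.exists_smul_eq G P Q
        rw [Sylow.smul_eq_of_normal])
      exact hPn
    · refine ⟨fun y hy g => ?_⟩
      obtain ⟨y', hy', l, hl, h⟩ := Q.exists_conj_eq_mul (L := L) hy g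
      have hyy' : g * y * g⁻¹ = y' := by
        refine eq_of_eq_mul_of_commute hq.out hp (Ne.symm hpq) ?_ (Q.exists_pow_eq_one hy')
          (hLpow l hl) h (hcomm q hq.out hpq y' (Q.exists_pow_eq_one hy') l (hLP hl))
        obtain ⟨k, hk⟩ := Q.exists_pow_eq_one hy
        exact ⟨k, by rw [conj_pow, hk]; group⟩
      rw [hyy']
      exact hy'
  have hPL : P.toSubgroup ≤ L := by
    intro h hh
    obtain ⟨a, ha, rfl⟩ := exists_eq_inv_mul_conj hp hq hpq P.2 hx (hinv q hq hpq x hx) hk hxk hh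
    have hc : Commute (QuotientGroup.mk' L x) (QuotientGroup.mk' L a) := by
      obtain ⟨i, hi⟩ := hx
      obtain ⟨j, hj⟩ := P.exists_pow_eq_one ha
      exact Group.IsNilpotent.commute_of_prime_pow hq hp (Ne.symm hpq)
        ⟨i, by rw [← map_pow, hi, map_one]⟩ ⟨j, by rw [← map_pow, hj, map_one]⟩
    have h1 : QuotientGroup.mk' L (a⁻¹ * (x * a * x⁻¹)) = 1 := by
      rw [map_mul, map_mul, map_mul, hc.eq]
      simp
    exact (QuotientGroup.eq_one_iff _).mp h1
  refine ⟨fun h => P.not_dvd_index ?_, fun H hHL => ?_⟩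
  · rwa [le_antisymm hPL hLP]
  · rw [← normalizer_eq_top_iff]
    refine Subgroup.eq_top_of_forall_exists_sylow_le _ fun r hr => ?_
    by_cases hpr : p = r
    · subst hpr
      refine ⟨P, fun y hy => mem_normalizer_of_forall_conj_mem fun h hh => ?_⟩
      rw [commute_of_not_commute_conj hp hq hpq P.2 hx (hinv q hq hpq x hx) hk hxk hy
        (hLP (hHL hh)) |>.eq, mul_inv_cancel_right]
      exact hh
    · obtain ⟨R⟩ : Nonempty (Sylow r G) := inferInstance
      exact ⟨R, fun y hy => mem_normalizer_of_forall_conj_mem fun h hh =>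
        hinv r hr hpr y (R.exists_pow_eq_one hy) H (hHL.trans hLP) h hh⟩

theorem IsSSTGroup.residual_prime {G : Type*} [Group G] [Finite G] [Group.IsSolvable G]
    (hG : IsSSTGroup G) {L : Subgroup G} (hL : IsNilpotentResidual L) {p : ℕ} (hp : p.Prime)
    (hpL : p ∣ Nat.card L) :
    ¬ p ∣ L.index ∧ ∀ h ∈ L, (∃ k, h ^ p ^ k = 1) → (zpowers h).Normal := by
  induction hn : Nat.card G using Nat.strong_induction_on generalizing G with
  | _ n ih =>
  have := Fact.mk hp
  have hLn := hL.1
  have hnil := hL.isNilpotent hG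
  by_cases hex : ∃ q : ℕ, q.Prime ∧ p ≠ q ∧ q ∣ Nat.card L
  · obtain ⟨q, hq, hpq, hqL⟩ := hex
    have := Fact.mk hq
    obtain ⟨S⟩ : Nonempty (Sylow q L) := inferInstance
    have hNn := S.normal_map_subtype
    have hNL : S.toSubgroup.map L.subtype ≤ L := map_subtype_le _
    have hNq : IsPGroup q (S.toSubgroup.map L.subtype) := S.2.map _
    have hNbot : S.toSubgroup.map L.subtype ≠ ⊥ := fun h => by
      rw [map_eq_bot_iff_of_injective _ L.subtype_injective] at h
      exact S.ne_bot_of_dvd_card hqL h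
    generalize S.toSubgroup.map L.subtype = N at hNn hNL hNq hNbot
    have hlt : Nat.card (G ⧸ N) < n := by
      rw [← hn, ← N.card_mul_index, ← index_eq_card]
      exact lt_mul_of_one_lt_left (Nat.pos_of_ne_zero index_ne_zero_of_finite)
        (N.one_lt_card_iff_ne_bot.mpr hNbot)
    have hindex : (L.map (QuotientGroup.mk' N)).index = L.index := by
      rw [index_map_eq _ (QuotientGroup.mk'_surjective N)]
      rwa [QuotientGroup.ker_mk']
    have hcard : p ∣ Nat.card (L.map (QuotientGroup.mk' N)) := by
      have h1 : Nat.card L * L.index = Nat.card N * N.index := by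
        rw [card_mul_index, card_mul_index]
      rw [N.index_eq_card, ← (L.map (QuotientGroup.mk' N)).card_mul_index, hindex,
        ← mul_assoc] at h1
      have h2 := Nat.eq_of_mul_eq_mul_right (Nat.pos_of_ne_zero index_ne_zero_of_finite) h1
      obtain ⟨j, hj⟩ := IsPGroup.iff_card.mp hNq
      rw [h2, hp.dvd_mul, hj] at hpL
      refine hpL.resolve_left fun h => hpq ?_
      exact (Nat.prime_dvd_prime_iff_eq hp hq).mp (hp.dvd_of_dvd_pow h)
    obtain ⟨h1, h2⟩ := ih _ hlt (hG.of_surjective (QuotientGroup.mk'_surjective N))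
      (hL.map_mk N) hcard rfl
    refine ⟨hindex ▸ h1, fun h hh ⟨k, hk⟩ => ?_⟩
    have hnorm := h2 (QuotientGroup.mk' N h) (mem_map_of_mem _ hh)
      ⟨k, by rw [← map_pow, hk, map_one]⟩
    have hconj : ∀ g : G, g * h * g⁻¹ ∈ zpowers h := by
      intro g
      obtain ⟨i, hi⟩ := mem_zpowers_iff.mp
        (hnorm.conj_mem _ (mem_zpowers _) (QuotientGroup.mk' N g))
      rw [← map_inv, ← map_mul, ← map_mul, ← map_zpow] at hi
      have hl : (h ^ i)⁻¹ * (g * h * g⁻¹) ∈ N := QuotientGroup.eq.mp hi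
      set l := (h ^ i)⁻¹ * (g * h * g⁻¹) with hldef
      have hlq : ∃ k, l ^ q ^ k = 1 := by
        simpa [Subtype.ext_iff] using hNq.exists_pow_pow_eq_one ⟨l, hl⟩
      have hip : ∃ k, (h ^ i) ^ p ^ k = 1 := by
        refine ⟨k, ?_⟩
        rw [← zpow_natCast, ← zpow_mul, mul_comm, zpow_mul, zpow_natCast, hk, one_zpow]
      have hc : Commute (h ^ i) l := by
        have hc := Group.IsNilpotent.commute_of_prime_pow (G := L) hp hq hpq
          (x := ⟨h ^ i, L.zpow_mem hh i⟩) (y := ⟨l, hNL hl⟩)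
          (by simpa [Subtype.ext_iff] using hip) (by simpa [Subtype.ext_iff] using hlq)
        exact congrArg Subtype.val hc
      have heq : g * h * g⁻¹ = h ^ i :=
        eq_of_eq_mul_of_commute hp hq hpq ⟨k, by rw [conj_pow, hk]; group⟩ hip hlq
          (by rw [hldef]; group) hc
      rw [heq]
      exact zpow_mem (mem_zpowers h) i
    refine ⟨fun y hy g => ?_⟩
    obtain ⟨i, rfl⟩ := mem_zpowers_iff.mp hy
    rw [← conj_zpow]
    exact zpow_mem (hconj g) i
  · push Not at hex
    have hLp : IsPGroup p L := by
      refine (isPGroup_iff_primeFactors_card_subset hp.ne_zero).mpr fun q hq => ?_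
      rw [hp.primeFactors, Finset.mem_singleton]
      by_contra hqp
      exact hex q (Nat.prime_of_mem_primeFactors hq) (Ne.symm hqp) (Nat.dvd_of_mem_primeFactors hq)
    have hne : L ≠ ⊥ := by
      rintro rfl
      rw [card_bot] at hpL
      exact hp.one_lt.ne' (Nat.dvd_one.mp hpL)
    obtain ⟨h1, h2⟩ := hG.residual_of_isPGroup hL hp hLp hne
    exact ⟨h1, fun h hh _ => h2 _ (zpowers_le.mpr hh)⟩

/-- Every subgroup of the nilpotent residual of a solvable SST-group is normal. -/
theorem IsSSTGroup.normal_of_le_residual {G : Type*} [Group G] [Finite G] [Group.IsSolvable G]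
    (hG : IsSSTGroup G) {L : Subgroup G} (hL : IsNilpotentResidual L) {H : Subgroup G}
    (hHL : H ≤ L) : H.Normal := by
  have hle : H ≤ H.normalCore := by
    refine Subgroup.le_of_forall_prime_pow_mem fun p hp x hx hxp => ?_
    rcases eq_or_ne x 1 with rfl | hx1
    · exact one_mem _
    have hpL : p ∣ Nat.card L := by
      obtain ⟨k, hk⟩ := hxp
      obtain ⟨j, -, hj⟩ := (Nat.dvd_prime_pow hp).mp (orderOf_dvd_of_pow_eq_one hk)
      have hj0 : j ≠ 0 := by
        rintro rfl
        exact hx1 (orderOf_eq_one_iff.mp (by simpa using hj))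
      refine (dvd_pow_self p hj0).trans (hj ▸ ?_)
      exact L.orderOf_dvd_natCard (hHL hx)
    have hn := (hG.residual_prime hL hp hpL).2 x (hHL hx) hxp
    exact fun g => zpowers_le.mpr hx (hn.conj_mem x (mem_zpowers x) g)
  rw [← le_antisymm H.normalCore_le hle]
  infer_instance

end Structure

section Frattini

variable {G : Type*} [Group G]

theorem mem_frattini_iff {x : G} : x ∈ frattini G ↔ ∀ M : Subgroup G, IsCoatom M → x ∈ M := by
  simp [frattini, Order.radical, Subgroup.mem_iInf]

theorem Subgroup.IsComplement'.exists_mul_eq {L D : Subgroup G} (hD : L.IsComplement' D) (x : G) :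
    ∃ l ∈ L, ∃ d ∈ D, l * d = x := by
  obtain ⟨⟨l, d⟩, h⟩ := hD.2 x
  exact ⟨l, l.2, d, d.2, h⟩

theorem Subgroup.IsComplement'.eq_one_of_mem {L D : Subgroup G} (hD : L.IsComplement' D) {x : G} (hl : x ∈ L)
    (hd : x ∈ D) : x = 1 :=
  Subgroup.disjoint_def.mp hD.disjoint hl hd

variable [Finite G] {L D : Subgroup G}

/-- A supplement `K` to a subgroup of `Φ(D)` contains `D`. -/
theorem le_of_forall_mem_mul_of_le_frattini {N K : Subgroup G}
    (hN : N ≤ (frattini D).map D.subtype)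
    (h : ∀ d ∈ D, ∃ n ∈ N, ∃ k ∈ K, n * k = d) : D ≤ K := by
  have hND : N ≤ D := hN.trans (map_subtype_le _)
  have htop : K.subgroupOf D ⊔ frattini D = ⊤ := by
    refine eq_top_iff.mpr fun d _ => ?_
    obtain ⟨n, hn, k, hk, hnk⟩ := h d d.2
    have hkD : k ∈ D := by
      have : k = n⁻¹ * d := by rw [← hnk]; group
      rw [this]
      exact D.mul_mem (D.inv_mem (hND hn)) d.2
    have hd : d = ⟨n, hND hn⟩ * ⟨k, hkD⟩ := Subtype.ext hnk.symm
    obtain ⟨n', hn', rfl⟩ := hN hn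
    rw [hd]
    exact mul_mem (mem_sup_right hn') (mem_sup_left hk)
  exact subgroupOf_eq_top.mp (frattini_nongenerating htop)

/-- A normal subgroup of `G` contained in the Frattini subgroup of a subgroup is contained in the
Frattini subgroup of `G`. -/
theorem le_frattini_of_le_map_frattini {N : Subgroup G} [N.Normal]
    (hN : N ≤ (frattini D).map D.subtype) : N ≤ frattini G := by
  refine fun x hx => mem_frattini_iff.mpr fun M hM => ?_
  by_contra hxM
  have htop : N ⊔ M = ⊤ := hM.2 _ (right_lt_sup.mpr fun h => hxM (h hx))
  have hDM : D ≤ M := le_of_forall_mem_mul_of_le_frattini hN fun d _ =>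
    mem_sup_of_normal_left.mp (htop ▸ mem_top d)
  exact hxM (hDM (map_subtype_le _ (hN hx)))

/-- In a finite nilpotent group every subgroup is complemented modulo the Frattini subgroup. -/
theorem exists_mul_eq_univ_of_isNilpotent [Group.IsNilpotent G] (A : Subgroup G) :
    ∃ B : Subgroup G, frattini G ≤ B ∧ (∀ x, ∃ a ∈ A, ∃ b ∈ B, a * b = x) ∧
      A ⊓ B ≤ frattini G := by
  obtain ⟨B, ⟨hB, hAB⟩, hmin⟩ := (Set.toFinite
    {B : Subgroup G | frattini G ≤ B ∧ ∀ x, ∃ a ∈ A, ∃ b ∈ B, a * b = x}).exists_minimal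
    ⟨⊤, le_top, fun x => ⟨1, A.one_mem, x, mem_top x, one_mul x⟩⟩
  refine ⟨B, hB, hAB, fun y hy => mem_frattini_iff.mpr fun M hM => ?_⟩
  by_contra hyM
  have hMn : M.Normal := 
    NormalizerCondition.normal_of_coatom M Group.normalizerCondition_of_isNilpotent hM
  have htop : (A ⊓ B) ⊔ M = ⊤ := hM.2 _ (right_lt_sup.mpr fun h => hyM (h hy))
  refine hyM ((hmin (y := B ⊓ M) ⟨le_inf hB (frattini_le_coatom hM), fun x => ?_⟩ inf_le_left
    hy.2).2)
  obtain ⟨a, ha, b, hb, rfl⟩ := hAB x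
  obtain ⟨c, hc, m, hm, rfl⟩ := mem_sup_of_normal_right.mp (htop ▸ mem_top b)
  exact ⟨a * c, A.mul_mem ha hc.1, m, ⟨(B.mul_mem_cancel_left hc.2).mp hb, hm⟩, mul_assoc _ _ _⟩

/-- The Frattini subgroup of a semidirect product in which the kernel has only normal subgroups
and is centralized by the Frattini subgroup of the complement. -/
theorem frattini_eq_sup_of_isComplement' (hD : L.IsComplement' D)
    (hLn : ∀ H ≤ L, H.Normal)
    (hcomm : ∀ d ∈ (frattini D).map D.subtype, ∀ l ∈ L, Commute d l) :
    frattini G = (frattini L).map L.subtype ⊔ (frattini D).map D.subtype := by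
  have := hLn L le_rfl
  have hΦL : ((frattini L).map L.subtype).Normal := hLn _ (map_subtype_le _)
  have hΦD : ((frattini D).map D.subtype).Normal := by
    refine ⟨fun x hx g => ?_⟩
    obtain ⟨l, hl, d, hd, rfl⟩ := hD.exists_mul_eq g
    obtain ⟨y, hy, rfl⟩ := hx
    have hmem : d * y * d⁻¹ ∈ (frattini D).map D.subtype :=
      ⟨⟨d, hd⟩ * y * ⟨d, hd⟩⁻¹, (inferInstance : (frattini D).Normal).conj_mem y hy _, rfl⟩
    have h : l * d * y * (l * d)⁻¹ = d * y * d⁻¹ := by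
      calc l * d * y * (l * d)⁻¹ = l * (d * y * d⁻¹) * l⁻¹ := by group
        _ = d * y * d⁻¹ := by rw [← (hcomm _ hmem l hl).eq]; group
    exact h.symm ▸ hmem
  have hL' : (frattini L).map L.subtype ≤ frattini G := le_frattini_of_le_map_frattini le_rfl
  have hD' : (frattini D).map D.subtype ≤ frattini G := le_frattini_of_le_map_frattini le_rfl
  refine le_antisymm (fun x hx => ?_) (sup_le hL' hD')
  obtain ⟨l, hl, d, hd, rfl⟩ := hD.exists_mul_eq x
  have hdΦ : d ∈ (frattini D).map D.subtype := by
    let e := hD.symm.QuotientMulEquiv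
    have h := frattini_le_comap_frattini_of_surjective
      (φ := e.toMonoidHom.comp (QuotientGroup.mk' L))
      (e.surjective.comp (QuotientGroup.mk'_surjective L)) hx
    refine ⟨⟨d, hd⟩, ?_, rfl⟩
    have he : e (QuotientGroup.mk' L (l * d)) = ⟨d, hd⟩ := by
      rw [← e.eq_symm_apply, map_mul, QuotientGroup.mk'_apply,
        (QuotientGroup.eq_one_iff l).mpr hl]
      exact one_mul _
    exact he ▸ h
  have hlΦ : l ∈ frattini G := (mul_mem_cancel_right (hD' hdΦ)).mp hx
  refine mul_mem_sup ⟨⟨l, hl⟩, mem_frattini_iff.mpr fun M hM => ?_, rfl⟩ hdΦ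
  have hMn : (M.map L.subtype).Normal := hLn _ (map_subtype_le _)
  have hne : M.map L.subtype ⊔ D ≠ ⊤ := by
    refine fun htop => hM.1 (eq_top_iff.mpr fun y _ => ?_)
    obtain ⟨m, ⟨m', hm', rfl⟩, d', hd', h⟩ := mem_sup_of_normal_left.mp (htop ▸ mem_top (y : G))
    have h1 : d' = 1 := by
      refine hD.eq_one_of_mem ?_ hd'
      have : d' = (m' : G)⁻¹ * y := by rw [← h]; simp
      exact this ▸ L.mul_mem (L.inv_mem m'.2) y.2
    have h2 : m' = y := Subtype.ext (by simpa [h1] using h)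
    exact h2 ▸ hm'
  obtain ⟨C, hC, hle⟩ := (eq_top_or_exists_le_coatom _).resolve_left hne
  have hCM : M = C.subgroupOf L := by
    by_contra hneq
    refine hC.1 (top_le_iff.mp (hD.sup_eq_top ▸ sup_le ?_ (le_sup_right.trans hle)))
    exact subgroupOf_eq_top.mp (hM.2 _ (lt_of_le_of_ne
      (fun m hm => hle (mem_sup_left (mem_map_of_mem _ hm))) hneq))
  rw [hCM]
  exact mem_frattini_iff.mp hlΦ C hC

/-- If `G = LD` with `L` and `D` nilpotent, every subgroup of `L` normal in `G`, and
`Φ(G) = Φ(L)Φ(D)`, then `G/Φ(G)` is complemented. -/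
theorem exists_isComplement'_quotient_frattini (hD : L.IsComplement' D)
    [Group.IsNilpotent L] [Group.IsNilpotent D] (hLn : ∀ H ≤ L, H.Normal)
    (hΦ : frattini G = (frattini L).map L.subtype ⊔ (frattini D).map D.subtype)
    (H' : Subgroup (G ⧸ frattini G)) : ∃ K : Subgroup (G ⧸ frattini G), H'.IsComplement' K := by
  have := hLn L le_rfl
  let H := H'.comap (QuotientGroup.mk' (frattini G))
  have hΦL : (frattini L).map L.subtype ≤ frattini G := hΦ ▸ le_sup_left
  have hΦD : (frattini D).map D.subtype ≤ frattini G := hΦ ▸ le_sup_right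
  have hΦH : frattini G ≤ H := fun x hx => by
    change QuotientGroup.mk' (frattini G) x ∈ H'
    rw [QuotientGroup.mk'_apply, (QuotientGroup.eq_one_iff x).mpr hx]
    exact H'.one_mem
  obtain ⟨B, -, hAB, hABΦ⟩ := exists_mul_eq_univ_of_isNilpotent (H.subgroupOf L)
  obtain ⟨D₂, -, hDD, hDDΦ⟩ := exists_mul_eq_univ_of_isNilpotent ((H ⊔ L).subgroupOf D)
  have hBn : (B.map L.subtype).Normal := hLn _ (map_subtype_le _)
  let K := B.map L.subtype ⊔ D₂.map D.subtype
  refine ⟨K.map (QuotientGroup.mk' (frattini G)), isComplement'_of_disjoint_and_mul_eq_univ ?_ ?_⟩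
  · refine Subgroup.disjoint_def.mpr ?_
    rintro _ hxH ⟨x, hxK, rfl⟩
    refine (QuotientGroup.eq_one_iff x).mpr ?_
    obtain ⟨_, ⟨b, hb, rfl⟩, _, ⟨d, hd, rfl⟩, rfl⟩ := mem_sup_of_normal_left.mp hxK
    have hbd : (b : G) * d ∈ H := hxH
    have hdΦ : (d : G) ∈ frattini G := by
      refine hΦD (mem_map_of_mem D.subtype (hDDΦ ⟨?_, hd⟩))
      have : (d : G) = (b : G)⁻¹ * (b * d) := by group
      change (d : G) ∈ H ⊔ L
      rw [this]
      exact mul_mem (mem_sup_right (L.inv_mem b.2)) (mem_sup_left hbd)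
    have hbH : (b : G) ∈ H := (H.mul_mem_cancel_right (hΦH hdΦ)).mp hbd
    exact mul_mem (hΦL (mem_map_of_mem L.subtype (hABΦ ⟨hbH, hb⟩))) hdΦ
  · refine Set.eq_univ_of_forall fun y => ?_
    obtain ⟨x, rfl⟩ := QuotientGroup.mk'_surjective (frattini G) y
    suffices h : ∃ h ∈ H, ∃ k ∈ K, h * k = x by
      obtain ⟨h, hh, k, hk, rfl⟩ := h
      exact ⟨_, hh, _, mem_map_of_mem _ hk, (map_mul _ _ _).symm⟩
    obtain ⟨l, hl, d, hd, rfl⟩ := hD.exists_mul_eq x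
    obtain ⟨d₁, hd₁, d₂, hd₂, h⟩ := hDD ⟨d, hd⟩
    have hld : l * d₁ ∈ H ⊔ L := mul_mem (mem_sup_right hl) hd₁
    obtain ⟨h₁, hh₁, l₁, hl₁, h'⟩ := mem_sup_of_normal_right.mp hld
    obtain ⟨a, ha, b, hb, h''⟩ := hAB ⟨l₁, hl₁⟩
    refine ⟨h₁ * a, H.mul_mem hh₁ ha, b * d₂,
      mul_mem_sup (mem_map_of_mem L.subtype hb) (mem_map_of_mem D.subtype hd₂), ?_⟩
    have e1 : (d₁ : G) * d₂ = d := congrArg Subtype.val h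
    have e2 : (a : G) * b = l₁ := congrArg Subtype.val h''
    calc h₁ * a * (b * d₂) = h₁ * (a * b) * d₂ := by group
      _ = l * d := by rw [e2, h', mul_assoc, e1]

end Frattini
/-- A complement of a normal subgroup all of whose subgroups are normal is SS-permutable. -/
theorem IsSSPermutable.of_isComplement' {G : Type*} [Group G] [Finite G]
    {L D : Subgroup G} (hD : L.IsComplement' D) (hLn : ∀ H ≤ L, H.Normal) : IsSSPermutable D := by
  have := hLn L le_rfl
  refine ⟨L, ?_, fun p _ P => ?_⟩
  · rw [Set.mul_comm_of_normal]
    exact Set.eq_univ_of_forall fun x => hD.exists_mul_eq x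
  · have := hLn (P.toSubgroup.map L.subtype) (map_subtype_le _)
    exact Set.mul_comm_of_normal _ _

theorem IsSSTGroup.commute_of_mem_frattini {G : Type*} [Group G] [Finite G] [Group.IsSolvable G]
    (hG : IsSSTGroup G) {L D : Subgroup G} [Group.IsNilpotent D] (hL : IsNilpotentResidual L)
    (hD : L.IsComplement' D) {d l : G} (hd : d ∈ (frattini D).map D.subtype) (hl : l ∈ L) :
    Commute d l := by
  have hLnormal := hL.1
  have hDss := IsSSPermutable.of_isComplement' hD fun _ => hG.normal_of_le_residual hL
  suffices h : (frattini D).map D.subtype ≤ centralizer {l} from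
    mem_centralizer_singleton_iff.mp (h hd)
  refine le_of_forall_prime_pow_mem fun q hq h hh hk => ?_
  obtain ⟨k, hk⟩ := hk
  have := Fact.mk hq
  rw [mem_centralizer_singleton_iff]
  rcases eq_or_ne h 1 with rfl | h1
  · simp
  have hzΦ : zpowers h ≤ (frattini D).map D.subtype := zpowers_le.mpr hh
  have hzD : zpowers h ≤ D := hzΦ.trans (map_subtype_le _)
  have hz : IsPGroup q (zpowers h) := isPGroup_zpowers_of_pow_eq_one hk
  have hqL : ¬ q ∣ Nat.card L := by
    intro hqL
    refine (hG.residual_prime hL hq hqL).1 ?_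
    rw [hD.symm.index_eq_card]
    refine dvd_trans ?_ (card_dvd_of_le hzD)
    obtain ⟨n, hn⟩ := hz.exists_card_eq
    rw [hn]
    refine dvd_pow_self q fun h0 => h1 ?_
    rw [h0, pow_zero, Nat.card_zpowers, orderOf_eq_one_iff] at hn
    exact hn
  obtain ⟨K, hK, hKP⟩ := hG (zpowers h) D hzD (IsSSPermutable.of_isNilpotent _) hDss
  have hmul : ∀ x : G, ∃ n ∈ zpowers h, ∃ k ∈ K, n * k = x := fun x =>
    Set.mem_mul.mp (hK ▸ Set.mem_univ x)
  have hDK : D ≤ K := le_of_forall_mem_mul_of_le_frattini hzΦ fun x _ => hmul x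
  obtain rfl : K = ⊤ := eq_top_iff.mpr fun x _ => by
    obtain ⟨n, hn, k, hk, rfl⟩ := hmul x
    exact K.mul_mem (hDK (hzD hn)) hk
  have hmem : ∀ Q : Sylow q G, h ∈ Q := fun Q => by
    refine hz.le_sylow_of_mul_comm Q ?_ (mem_zpowers h)
    have := hKP q (Q.subtype le_top)
    rwa [Sylow.coe_subtype, subgroupOf_map_subtype, inf_of_le_left le_top] at this
  obtain ⟨Q⟩ : Nonempty (Sylow q G) := inferInstance
  have hconj : l * h⁻¹ * l⁻¹ ∈ Q := by
    obtain ⟨y, hy, hyh⟩ := mem_smul_pointwise_iff_exists _ _ _ |>.mp (hmem (l⁻¹ • Q))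
    rw [MulAut.smul_def, MulAut.conj_apply] at hyh
    have : l * h⁻¹ * l⁻¹ = y⁻¹ := by rw [← hyh]; group
    exact this ▸ Q.inv_mem hy
  have hQ : h * (l * h⁻¹ * l⁻¹) ∈ Q := Q.mul_mem (hmem Q) hconj
  have hL' : h * (l * h⁻¹ * l⁻¹) ∈ L := by
    have : h * (l * h⁻¹ * l⁻¹) = h * l * h⁻¹ * l⁻¹ := by group
    rw [this]
    exact L.mul_mem (hLnormal.conj_mem l hl h) (L.inv_mem hl)
  have h1 : h * (l * h⁻¹ * l⁻¹) = 1 := by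
    obtain ⟨j, hj⟩ := Q.exists_pow_eq_one hQ
    rw [← orderOf_eq_one_iff]
    refine Nat.Coprime.eq_one_of_dvd ?_ (L.orderOf_dvd_natCard hL')
    exact Nat.Coprime.coprime_dvd_left (orderOf_dvd_of_pow_eq_one hj)
      (((Nat.Prime.coprime_iff_not_dvd hq).mpr hqL).pow_left j)
  calc h * l = h * (l * h⁻¹ * l⁻¹) * (l * h) := by group
    _ = l * h := by rw [h1, one_mul]

/-- Theorem E. -/
theorem theoremE {G : Type*} [Group G] [Finite G]
    (hsol : IsSolvable G) (hsst : IsSSTGroup G)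
    (L D : Subgroup G) (hL : IsNilpotentResidual L) (hD : L.IsComplement' D) :
    frattini G = (frattini L).map L.subtype ⊔ (frattini D).map D.subtype ∧
      ∀ H : Subgroup (G ⧸ frattini G), ∃ K : Subgroup (G ⧸ frattini G),
        H.IsComplement' K := by
  have : Group.IsSolvable G := hsol
  have := hL.1
  have := hL.2.1
  have hLnil := hL.isNilpotent hsst
  have hDnil : Group.IsNilpotent D := Group.nilpotent_of_mulEquiv hD.symm.QuotientMulEquiv
  have hLn : ∀ H ≤ L, H.Normal := fun _ => hsst.normal_of_le_residual hL
  have hΦ := frattini_eq_sup_of_isComplement' hD hLn fun _ hd _ hl =>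
    hsst.commute_of_mem_frattini hL hD hd hl
  exact ⟨hΦ, exists_isComplement'_quotient_frattini hD hLn hΦ⟩
end

section
/- Let n ≥ 2 and let G_1, ..., G_n be finite groups. The direct product G_1 × G_2 × ⋯ × G_n is a solvable BT-group if and only if each G_i is a solvable BT-group with nilpotent residual L_i, and gcd(|L_i|, |G_j|) = 1 for all 1 ≤ i, j ≤ n with i ≠ j. -/
open scoped Pointwise

/-- Any two elements of coprime order generate permuting cyclic subgroups. -/
def CoprimePermute (G : Type*) [Group G] : Prop :=
  ∀ x y : G, (orderOf x).Coprime (orderOf y) → ∃ m n : ℤ, x * y = y ^ m * x ^ n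

section CoprimePermute

variable {G : Type*} [Group G]

theorem CoprimePermute.of_injective {K : Type*} [Group K] (hG : CoprimePermute G) (f : K →* G)
    (hf : Function.Injective f) : CoprimePermute K := by
  intro x y hxy
  rw [← orderOf_injective f hf x, ← orderOf_injective f hf y] at hxy
  obtain ⟨m, n, h⟩ := hG _ _ hxy
  exact ⟨m, n, hf (by simpa using h)⟩

theorem CoprimePermute.mul_subset_mul (hG : CoprimePermute G) {H K : Subgroup G}
    (h : (Nat.card H).Coprime (Nat.card K)) : (H : Set G) * (K : Set G) ⊆ (K : Set G) * H := by
  rintro _ ⟨x, hx, y, hy, rfl⟩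
  obtain ⟨m, n, e⟩ := hG x y ((h.coprime_dvd_left (H.orderOf_dvd_natCard hx)).coprime_dvd_right
    (K.orderOf_dvd_natCard hy))
  exact ⟨y ^ m, K.zpow_mem hy m, x ^ n, H.zpow_mem hx n, e.symm⟩

theorem CoprimePermute.isSemipermutable (hG : CoprimePermute G) (H : Subgroup G) :
    IsSemipermutable H := fun _ h =>
  (hG.mul_subset_mul h).antisymm (hG.mul_subset_mul h.symm)

theorem CoprimePermute.isBTGroup (hG : CoprimePermute G) : IsBTGroup G :=
  fun H _ _ _ _ => hG.isSemipermutable H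

theorem isSemipermutable_of_normal (N : Subgroup G) [N.Normal] : IsSemipermutable N :=
  fun X _ => Subgroup.set_mul_normal_comm (X : Set G) N |>.symm

theorem exists_normal_prime_index_of_isSolvable [Finite G] [Nontrivial G] [Group.IsSolvable G] :
    ∃ N : Subgroup G, N.Normal ∧ N.index.Prime := by
  obtain ⟨N, hN, hle⟩ := (eq_top_or_exists_le_coatom (commutator G)).resolve_left
    (Group.IsSolvable.commutator_lt_top_of_nontrivial G).ne
  have hnormal : N.Normal := Subgroup.Normal.of_commutator_le G hle
  refine ⟨N, hnormal, ?_⟩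
  have hcomm : IsMulCommutative (G ⧸ N) :=
    Subgroup.Normal.quotient_commutative_iff_commutator_le.mpr hle
  have : Nontrivial (G ⧸ N) := QuotientGroup.nontrivial_iff.mpr hN.1
  have hsimple : IsSimpleGroup (G ⧸ N) := ⟨fun H _ => by
    have hNH : N ≤ H.comap (QuotientGroup.mk' N) := by
      simpa using (QuotientGroup.mk' N).ker_le_comap H
    have hsurj := QuotientGroup.mk'_surjective N
    rcases hN.le_iff.mp hNH with h | h
    · exact .inr (Subgroup.comap_injective hsurj (by simpa using h))
    · exact .inl (Subgroup.comap_injective hsurj (by simpa using h))⟩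
  exact Group.is_simple_iff_prime_card.mp hsimple

theorem Subgroup.mem_of_coprime_orderOf_index {N : Subgroup G} [N.Normal] {x : G}
    (h : (orderOf x).Coprime N.index) : x ∈ N := by
  rw [← QuotientGroup.eq_one_iff, ← orderOf_eq_one_iff]
  refine Nat.eq_one_of_dvd_coprimes h (orderOf_map_dvd (QuotientGroup.mk' N) x) ?_
  exact _root_.orderOf_dvd_natCard _

theorem IsSemipermutable.exists_mul_eq {H K : Subgroup G} (hH : IsSemipermutable H)
    (h : (Nat.card H).Coprime (Nat.card K)) {x y : G} (hx : x ∈ H) (hy : y ∈ K) :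
    (∃ y' ∈ K, ∃ x' ∈ H, x * y = y' * x') ∧ ∃ x' ∈ H, ∃ y' ∈ K, y * x = x' * y' := by
  have e := hH K h
  constructor
  · obtain ⟨y', hy', x', hx', h'⟩ := e ▸ Set.mul_mem_mul hx hy
    exact ⟨y', hy', x', hx', h'.symm⟩
  · obtain ⟨x', hx', y', hy', h'⟩ := e ▸ Set.mul_mem_mul hy hx
    exact ⟨x', hx', y', hy', h'.symm⟩

theorem IsBTGroup.coprimePermute_of_isSemipermutable [Finite G] [Group.IsSolvable G]
    (hG : IsBTGroup G) (M : Subgroup G) (hM : IsSemipermutable M) : CoprimePermute M := by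
  induction M using WellFoundedLT.induction with
  | ind M ih =>
  intro x y hxy
  rcases subsingleton_or_nontrivial M with hsub | hnt
  · exact ⟨0, 0, Subsingleton.elim _ _⟩
  obtain ⟨N, hN, hprime⟩ := exists_normal_prime_index_of_isSolvable (G := M)
  have hle : N.map M.subtype ≤ M := Subgroup.map_subtype_le N
  have hlt : N.map M.subtype < M := by
    refine lt_of_le_of_ne hle fun h => ?_
    have : N = ⊤ := Subgroup.map_injective M.subtype_injective
      (by simpa [← MonoidHom.range_eq_map] using h)
    exact hprime.ne_one (by simp [this])
  have hsemi : IsSemipermutable (N.map M.subtype) := by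
    refine hG _ M hle ?_ hM
    rw [Subgroup.subgroupOf, Subgroup.comap_map_eq_self_of_injective M.subtype_injective]
    exact isSemipermutable_of_normal N
  have hzpowers : ∀ z ∈ N, IsSemipermutable (Subgroup.zpowers (z : G)) := fun z hz =>
    hG _ _ (by simpa using hz) ((ih _ hlt hsemi).isSemipermutable _) hsemi
  have hxy' : (Nat.card (Subgroup.zpowers (x : G))).Coprime
      (Nat.card (Subgroup.zpowers (y : G))) := by
    simpa using hxy
  have hx := Subgroup.mem_zpowers (x : G)
  have hy := Subgroup.mem_zpowers (y : G)
  have key : x ∈ N ∨ y ∈ N := by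
    by_contra! h
    have hdvd : ∀ z, z ∉ N → N.index ∣ orderOf z := fun z hz => by
      by_contra hnd
      exact hz (Subgroup.mem_of_coprime_orderOf_index
        ((hprime.coprime_iff_not_dvd.mpr hnd).symm))
    exact hprime.ne_one (Nat.eq_one_of_dvd_coprimes hxy (hdvd x h.1) (hdvd y h.2))
  have hex : ∃ y' ∈ Subgroup.zpowers (y : G), ∃ x' ∈ Subgroup.zpowers (x : G),
      (x : G) * y = y' * x' := by
    rcases key with h | h
    · exact ((hzpowers x h).exists_mul_eq hxy' hx hy).1
    · exact ((hzpowers y h).exists_mul_eq hxy'.symm hy hx).2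
  obtain ⟨_, ⟨m, rfl⟩, _, ⟨n, rfl⟩, e⟩ := hex
  exact ⟨m, n, Subtype.ext (by simpa using e)⟩

theorem IsBTGroup.coprimePermute [Finite G] [Group.IsSolvable G] (hG : IsBTGroup G) :
    CoprimePermute G :=
  (hG.coprimePermute_of_isSemipermutable ⊤ (isSemipermutable_of_normal ⊤)).of_injective
    (Subgroup.topEquiv (G := G)).symm.toMonoidHom (Subgroup.topEquiv (G := G)).symm.injective

end CoprimePermute

theorem isSolvable_pi {ι : Type*} [Finite ι] {G : ι → Type*} [∀ i, Group (G i)]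
    [∀ i, Group.IsSolvable (G i)] : Group.IsSolvable (∀ i, G i) := by
  have := Fintype.ofFinite ι
  choose k hk using fun i => Group.IsSolvable.solvable (G := G i)
  refine ⟨⟨Finset.univ.sup k, ?_⟩⟩
  rw [eq_bot_iff]
  intro x hx
  rw [Subgroup.mem_bot]
  funext i
  have h : x i ∈ derivedSeries (G i) (Finset.univ.sup k) :=
    map_derivedSeries_le_derivedSeries (Pi.evalMonoidHom G i) _ ⟨x, hx, rfl⟩
  have h' := derivedSeries_antitone (G i) (Finset.le_sup (f := k) (Finset.mem_univ i)) h
  rwa [hk, Subgroup.mem_bot] at h'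

section Nilpotent

variable {G : Type*} [Group G] [Finite G]

theorem commute_of_coprime_orderOf_of_isNilpotent [Group.IsNilpotent G] {x y : G}
    (h : (orderOf x).Coprime (orderOf y)) : Commute x y := by
  obtain ⟨e⟩ := ((Group.isNilpotent_of_finite_tfae (G := G)).out 0 4).mp ‹_›
  have hone : ∀ (z : G) (p : (Nat.card G).primeFactors) (P : Sylow p G),
      ¬ (p : ℕ) ∣ orderOf z → e.symm z p P = 1 := fun z p P hp => by
    have : Fact (p : ℕ).Prime := ⟨Nat.prime_of_mem_primeFactors p.2⟩
    obtain ⟨k, hk⟩ := IsPGroup.iff_orderOf.mp P.isPGroup' (e.symm z p P)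
    have hdvd : orderOf (e.symm z p P) ∣ orderOf z := by
      rw [orderOf_dvd_iff_pow_eq_one]
      rw [← Pi.pow_apply, ← Pi.pow_apply, ← map_pow, pow_orderOf_eq_one, map_one]
      rfl
    rcases k with _ | k
    · exact orderOf_eq_one_iff.mp (by simpa using hk)
    · exact absurd ((dvd_pow_self _ k.succ_ne_zero).trans (hk ▸ hdvd)) hp
  refine e.symm.injective ?_
  rw [map_mul, map_mul]
  funext p P
  simp only [Pi.mul_apply]
  by_cases hp : (p : ℕ) ∣ orderOf x
  · rw [hone y p P fun hp' => (Nat.prime_of_mem_primeFactors p.2).ne_one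
      (Nat.eq_one_of_dvd_coprimes h hp hp'), mul_one, one_mul]
  · rw [hone x p P hp, mul_one, one_mul]

theorem exists_isNilpotentResidual (G : Type*) [Group G] [Finite G] :
    ∃ L : Subgroup G, IsNilpotentResidual L := by
  obtain ⟨n, hn⟩ := WellFoundedGT.monotone_chain_condition
    (⟨fun k => OrderDual.toDual ((⊤ : Subgroup G).lowerCentralSeries k), fun _ _ h =>
      (⊤ : Subgroup G).lowerCentralSeries_antitone h⟩ : ℕ →o (Subgroup G)ᵒᵈ)
  refine ⟨(⊤ : Subgroup G).lowerCentralSeries n, inferInstance, fun {_} => ⟨?_, ?_⟩⟩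
  · rw [Subgroup.nilpotent_iff_lowerCentralSeries]
    refine ⟨n, ?_⟩
    have h := (⊤ : Subgroup G).map_lowerCentralSeries
      (QuotientGroup.mk' ((⊤ : Subgroup G).lowerCentralSeries n)) n
    rw [Subgroup.map_top_of_surjective _ (QuotientGroup.mk'_surjective _)] at h
    rw [← h, QuotientGroup.map_mk'_self]
  · intro N _ hN
    obtain ⟨k, hk⟩ := Subgroup.nilpotent_iff_lowerCentralSeries.mp hN
    have h := (⊤ : Subgroup G).map_lowerCentralSeries (QuotientGroup.mk' N) k
    rw [Subgroup.map_top_of_surjective _ (QuotientGroup.mk'_surjective _), hk,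
      Subgroup.map_eq_bot_iff, QuotientGroup.ker_mk'] at h
    refine le_trans ?_ h
    rcases le_total n k with hnk | hkn
    · exact (OrderDual.toDual_inj.mp (hn k hnk)).le
    · exact (⊤ : Subgroup G).lowerCentralSeries_antitone hkn

theorem CoprimePermute.exists_mul_eq_of_isNilpotent_quotient (hG : CoprimePermute G)
    (L : Subgroup G) [L.Normal] [Group.IsNilpotent (G ⧸ L)] {x y : G}
    (h : (orderOf x).Coprime (orderOf y)) :
    ∃ m n : ℤ, x * y = y * y ^ m * (x ^ n * x) ∧ y ^ m ∈ L ∧ x ^ n ∈ L := by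
  obtain ⟨m, n, e⟩ := hG x y h
  have hdvd : ∀ z : G, orderOf (z : G ⧸ L) ∣ orderOf z :=
    fun z => orderOf_map_dvd (QuotientGroup.mk' L) z
  have hcop := (h.coprime_dvd_left (hdvd x)).coprime_dvd_right (hdvd y)
  have hcomm : Commute (x : G ⧸ L) y := commute_of_coprime_orderOf_of_isNilpotent hcop
  have e' : (x : G ⧸ L) * y = (y : G ⧸ L) ^ m * (x : G ⧸ L) ^ n := by
    simpa using congrArg (QuotientGroup.mk' L) e
  have e'' : (y : G ⧸ L) ^ (m - 1) * (x : G ⧸ L) ^ (n - 1) = 1 := by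
    rw [sub_eq_neg_add, zpow_add, zpow_sub_one, mul_assoc, ← mul_assoc (_ ^ m), ← e', hcomm.eq]
    simp
  have hbot : Disjoint (Subgroup.zpowers (x : G ⧸ L)) (Subgroup.zpowers (y : G ⧸ L)) :=
    Subgroup.disjoint_of_coprime_natCard (by simpa using hcop)
  have hx : (x : G ⧸ L) ^ (n - 1) = 1 := by
    refine Subgroup.disjoint_def.mp hbot ⟨_, rfl⟩ ?_
    rw [← inv_eq_of_mul_eq_one_right e'']
    exact inv_mem ⟨_, rfl⟩
  have hy : (y : G ⧸ L) ^ (m - 1) = 1 := by simpa [hx] using e''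
  refine ⟨m - 1, n - 1, ?_, ?_, ?_⟩
  · rw [e, ← zpow_one_add, ← zpow_add_one]
    simp
  · rw [← QuotientGroup.eq_one_iff]
    simpa using hy
  · rw [← QuotientGroup.eq_one_iff]
    simpa using hx

end Nilpotent

section Pi

variable {ι : Type*} [Finite ι] {G : ι → Type*} [∀ i, Group (G i)]

theorem Pi.mem_zpowers_of_coprime (L : ∀ i, Subgroup (G i))
    (hL : ∀ i j, i ≠ j → (Nat.card (L i)).Coprime (Nat.card (G j))) (y : ∀ i, G i) (m : ι → ℤ)
    (hm : ∀ i, y i ^ m i ∈ L i) : (fun i => y i ^ m i) ∈ Subgroup.zpowers y := by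
  classical
  have := Fintype.ofFinite ι
  refine Subgroup.pi_mem_of_mulSingle_mem _ fun i => ?_
  set N := ∏ j ∈ Finset.univ.erase i, Nat.card (G j)
  have hcop : (orderOf (y i ^ m i)).Coprime N :=
    Nat.Coprime.prod_right fun j hj =>
      (hL i j (Finset.ne_of_mem_erase hj).symm).coprime_dvd_left ((L i).orderOf_dvd_natCard (hm i))
  obtain ⟨a, ha⟩ := exists_pow_eq_self_of_coprime hcop.symm
  refine ⟨N * (m i * a), ?_⟩
  funext j
  rcases eq_or_ne j i with rfl | hj
  · simp only [Pi.pow_apply, Pi.mulSingle_eq_same]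
    conv_rhs => rw [← ha]
    rw [← zpow_natCast, ← zpow_natCast, ← zpow_mul, ← zpow_mul]
    congr 1
    ring
  · have h1 : y j ^ N = 1 := by
      obtain ⟨c, hc⟩ : Nat.card (G j) ∣ N := Finset.dvd_prod_of_mem _ (by simp [hj])
      rw [hc, pow_mul, pow_card_eq_one', one_pow]
    simp only [Pi.pow_apply, Pi.mulSingle_eq_of_ne hj]
    rw [zpow_mul, zpow_natCast, h1, one_zpow]

theorem CoprimePermute.pi [∀ i, Finite (G i)] (hG : ∀ i, CoprimePermute (G i))
    (L : ∀ i, Subgroup (G i))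
    [∀ i, (L i).Normal] [∀ i, Group.IsNilpotent (G i ⧸ L i)]
    (hL : ∀ i j, i ≠ j → (Nat.card (L i)).Coprime (Nat.card (G j))) :
    CoprimePermute (∀ i, G i) := by
  intro x y hxy
  have hdvd : ∀ (z : ∀ i, G i) i, orderOf (z i) ∣ orderOf z :=
    fun z i => orderOf_map_dvd (Pi.evalMonoidHom G i) z
  choose m n e hm hn using fun i => (hG i).exists_mul_eq_of_isNilpotent_quotient (L i)
    ((hxy.coprime_dvd_left (hdvd x i)).coprime_dvd_right (hdvd y i))
  obtain ⟨a, ha⟩ := Pi.mem_zpowers_of_coprime L hL y m hm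
  obtain ⟨b, hb⟩ := Pi.mem_zpowers_of_coprime L hL x n hn
  refine ⟨1 + a, b + 1, ?_⟩
  rw [zpow_one_add, zpow_add_one, show y ^ a = _ from ha, show x ^ b = _ from hb]
  exact funext e

end Pi

section Residual

variable {G : Type*} [Group G]

theorem CoprimePermute.exists_subgroup_card_eq [Finite G] (hG : CoprimePermute G) {n : ℕ}
    (hn : n ∣ Nat.card G) : ∃ T : Subgroup G, Nat.card T = n := by
  induction n using Nat.recOnPosPrimePosCoprime with
  | prime_pow p k hp hk =>
    have := Fact.mk hp
    exact Sylow.exists_subgroup_card_pow_prime p hn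
  | zero => exact absurd (Nat.eq_zero_of_zero_dvd hn) Nat.card_pos.ne'
  | one => exact ⟨⊥, by simp⟩
  | coprime a b ha hb hab iha ihb =>
    obtain ⟨A, hA⟩ := iha ((dvd_mul_right a b).trans hn)
    obtain ⟨B, hB⟩ := ihb ((dvd_mul_left b a).trans hn)
    have hcop : (Nat.card A).Coprime (Nat.card B) := by rwa [hA, hB]
    have hperm := hG.isSemipermutable A B hcop
    let T : Subgroup G :=
      { carrier := (A : Set G) * B
        mul_mem' := fun {u v} hu hv => by
          have h := Set.mul_mem_mul hu hv
          rwa [mul_assoc, ← mul_assoc (B : Set G), ← hperm, mul_assoc (A : Set G),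
            coe_mul_coe B, ← mul_assoc, coe_mul_coe A] at h
        one_mem' := ⟨1, one_mem A, 1, one_mem B, mul_one 1⟩
        inv_mem' := fun {u} hu => by
          have h := Set.inv_mem_inv.mpr hu
          rwa [mul_inv_rev, inv_coe_set, inv_coe_set, ← hperm] at h }
    refine ⟨T, ?_⟩
    have hT : (T : Set G) = Set.range fun g : A × B => (g.1 * g.2 : G) := by
      ext u
      change u ∈ (A : Set G) * B ↔ _
      simp [Set.mem_mul]
    have hinj := Subgroup.mul_injective_of_disjoint (Subgroup.disjoint_of_coprime_natCard hcop)
    rw [← hA, ← hB, ← Nat.card_prod, ← Nat.card_range_of_injective hinj, ← hT]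
    rfl

/-- If `K` has an element of order `p`, then every `p`-element of `G` normalizes every cyclic
subgroup of `G` of order coprime to `p`. -/
theorem CoprimePermute.conj_mem_zpowers_of_prod {K : Type*} [Group K]
    (hGK : CoprimePermute (G × K)) {p : ℕ} {y : K} (hy : orderOf y = p)
    (k : ℕ) {x g : G} (hx : x ^ p ^ k = 1) (hg : (orderOf g).Coprime p) :
    x * g * x⁻¹ ∈ Subgroup.zpowers g := by
  induction k generalizing x g with
  | zero =>
    obtain rfl : x = 1 := by simpa using hx
    simp
  | succ k ih =>
    have hxy : (x, y) ^ p ^ (k + 1) = 1 := by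
      ext
      · exact hx
      · have : y ^ p = 1 := hy ▸ pow_orderOf_eq_one y
        simp [pow_succ', pow_mul, this]
    have hcop : (orderOf (x, y)).Coprime (orderOf (g, (1 : K))) := by
      refine Nat.Coprime.coprime_dvd_left (orderOf_dvd_of_pow_eq_one hxy) ?_
      rw [Prod.orderOf_mk]
      simpa using (hg.symm.pow_left (k + 1))
    obtain ⟨m, n, e⟩ := hGK _ _ hcop
    have e1 : x * g = g ^ m * x ^ n := by simpa using congrArg Prod.fst e
    have e2 : y = y ^ n := by simpa using congrArg Prod.snd e
    obtain ⟨c, hc⟩ : (p : ℤ) ∣ n - 1 := by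
      rw [← hy, orderOf_dvd_iff_zpow_eq_one, zpow_sub_one, ← e2, mul_inv_cancel]
    have e3 : x * g * x⁻¹ = g ^ m * (x ^ p) ^ c := by
      rw [e1, mul_assoc, ← zpow_sub_one, hc, zpow_mul, zpow_natCast]
    set w := (x ^ p) ^ c with hw
    have hwpow : w ^ p ^ k = 1 := by
      rw [hw, ← zpow_natCast, zpow_comm, zpow_natCast (x ^ p), ← pow_mul, ← pow_succ', hx, one_zpow]
    have hconj : ∀ z ∈ Subgroup.zpowers g, w * z * w⁻¹ ∈ Subgroup.zpowers g := by
      rintro _ ⟨i, rfl⟩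
      rw [← conj_zpow]
      exact zpow_mem (ih hwpow hg) i
    have hpow : ∀ j : ℕ, ∃ z ∈ Subgroup.zpowers g, (g ^ m * w) ^ j = z * w ^ j := by
      intro j
      induction j with
      | zero => exact ⟨1, one_mem _, by simp⟩
      | succ j ihj =>
        obtain ⟨z, hz, hj⟩ := ihj
        refine ⟨g ^ m * (w * z * w⁻¹), mul_mem ⟨m, rfl⟩ (hconj z hz), ?_⟩
        rw [pow_succ', hj, pow_succ' w]
        group
    obtain ⟨z, hz, hz'⟩ := hpow (orderOf g)
    have hpow1 : (g ^ m * w) ^ orderOf g = 1 := by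
      rw [← e3, conj_pow, pow_orderOf_eq_one]
      simp
    have hwg : w ^ orderOf g ∈ Subgroup.zpowers g := by
      rw [hpow1] at hz'
      rw [eq_inv_of_mul_eq_one_right hz'.symm]
      exact inv_mem hz
    have hordw : (orderOf w).Coprime (orderOf g) :=
      Nat.Coprime.coprime_dvd_left (orderOf_dvd_of_pow_eq_one hwpow) (hg.symm.pow_left k)
    have hdisj : Disjoint (Subgroup.zpowers w) (Subgroup.zpowers g) :=
      Subgroup.disjoint_of_coprime_natCard (by simpa using hordw)
    have hw1 : w ^ orderOf g = 1 :=
      Subgroup.disjoint_def.mp hdisj (pow_mem (Subgroup.mem_zpowers w) _) hwg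
    have : w = 1 := orderOf_eq_one_iff.mp
      (hordw.eq_one_of_dvd (orderOf_dvd_of_pow_eq_one hw1))
    rw [e3, this, mul_one]
    exact ⟨m, rfl⟩

theorem CoprimePermute.coprime_card_of_prod {K : Type*} [Group K] [Finite G] [Finite K]
    (hGK : CoprimePermute (G × K)) {L : Subgroup G} (hL : IsNilpotentResidual L) :
    (Nat.card L).Coprime (Nat.card K) := by
  refine Nat.coprime_of_dvd fun p hp hpL hpK => ?_
  have := Fact.mk hp
  obtain ⟨y, hy⟩ := exists_prime_orderOf_dvd_card' p hpK
  have hG : CoprimePermute G :=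
    hGK.of_injective (MonoidHom.inl G K) fun a b h => congrArg Prod.fst h
  obtain ⟨T, hT⟩ := hG.exists_subgroup_card_eq (Nat.ordCompl_dvd (Nat.card G) p)
  have hpT : (Nat.card T).Coprime p := by
    rw [hT]
    exact (Nat.coprime_ordCompl hp Nat.card_pos.ne').symm
  obtain ⟨P⟩ : Nonempty (Sylow p G) := inferInstance
  have hPle : (P : Subgroup G) ≤ Subgroup.normalizer (T : Set G) := by
    have hconj : ∀ x ∈ P, ∀ g ∈ T, x * g * x⁻¹ ∈ T := fun x hx g hg => by
      obtain ⟨k, hk⟩ := P.isPGroup' ⟨x, hx⟩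
      have hmem := hGK.conj_mem_zpowers_of_prod hy k (x := x) (g := g)
        (by simpa using congrArg Subtype.val hk)
        (hpT.coprime_dvd_left (T.orderOf_dvd_natCard hg))
      exact (Subgroup.zpowers_le.mpr hg) hmem
    intro x hx
    rw [Subgroup.mem_normalizer_iff]
    refine fun g => ⟨hconj x hx g, fun h => ?_⟩
    simpa [mul_assoc] using hconj x⁻¹ (inv_mem hx) _ h
  have hcard : Nat.card P * Nat.card T = Nat.card G := by
    rw [P.card_eq_multiplicity, hT]
    exact Nat.ordProj_mul_ordCompl_eq_self _ _
  have hcop : (Nat.card P).Coprime (Nat.card T) := by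
    rw [P.card_eq_multiplicity]
    exact hpT.symm.pow_left _
  have hnormal : T.Normal := by
    rw [← Subgroup.normalizer_eq_top_iff]
    refine Subgroup.eq_top_of_card_eq _ (Nat.dvd_antisymm (Subgroup.card_subgroup_dvd_card _) ?_)
    rw [← hcard]
    exact hcop.mul_dvd_of_dvd_of_dvd (Subgroup.card_dvd_of_le hPle)
      (Subgroup.card_dvd_of_le T.le_normalizer)
  have hquot : Group.IsNilpotent (G ⧸ T) := by
    have hcardq : Nat.card (G ⧸ T) = Nat.card P := by
      have := T.card_eq_card_quotient_mul_card_subgroup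
      rw [← hcard] at this
      exact (Nat.eq_of_mul_eq_mul_right Nat.card_pos this).symm
    rw [P.card_eq_multiplicity] at hcardq
    exact (IsPGroup.of_card hcardq).isNilpotent
  have := hL.1
  have hle : L ≤ T := hL.2.2 T hquot
  exact hp.one_lt.ne' (hpT.symm.eq_one_of_dvd
    (hpL.trans (Subgroup.card_dvd_of_le hle)))

end Residual

/-- Theorem G. -/
theorem theoremG (n : ℕ) (hn : 2 ≤ n) (G : Fin n → Type*)
    [∀ i, Group (G i)] [∀ i, Finite (G i)] :
    (IsSolvable (∀ i, G i) ∧ IsBTGroup (∀ i, G i)) ↔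
      (∀ i, IsSolvable (G i) ∧ IsBTGroup (G i)) ∧
        ∀ (i j : Fin n), i ≠ j → ∀ L : Subgroup (G i), IsNilpotentResidual L →
          Nat.Coprime (Nat.card L) (Nat.card (G j)) := by
  constructor
  · rintro ⟨hsolv, hBT⟩
    have hsolv' : Group.IsSolvable (∀ i, G i) := hsolv
    have hperm := hBT.coprimePermute
    refine ⟨fun i => ⟨?_, ?_⟩, fun i j hij L hL => ?_⟩
    · exact Group.isSolvable_of_surjective (f := Pi.evalMonoidHom G i) (Function.surjective_eval i)
    · exact (hperm.of_injective (MonoidHom.mulSingle G i) (Pi.mulSingle_injective i)).isBTGroup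
    · refine CoprimePermute.coprime_card_of_prod (hperm.of_injective
        ((MonoidHom.mulSingle G i).noncommCoprod (MonoidHom.mulSingle G j) fun a b =>
          Pi.mulSingle_commute hij a b) fun a b h => ?_) hL
      change Pi.mulSingle i a.1 * Pi.mulSingle j a.2 =
        Pi.mulSingle i b.1 * Pi.mulSingle j b.2 at h
      have hi : a.1 = b.1 := by simpa [hij] using congrFun h i
      have hj : a.2 = b.2 := by simpa [hij.symm] using congrFun h j
      exact Prod.ext hi hj
  · rintro ⟨hfactor, hcop⟩
    have hsolv : ∀ i, Group.IsSolvable (G i) := fun i => (hfactor i).1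
    refine ⟨isSolvable_pi, ?_⟩
    choose L hL using fun i => exists_isNilpotentResidual (G i)
    have hnormal : ∀ i, (L i).Normal := fun i => (hL i).1
    have hnil : ∀ i, Group.IsNilpotent (G i ⧸ L i) := fun i => (hL i).2.1
    exact (CoprimePermute.pi (fun i => (hfactor i).2.coprimePermute) L
      fun i j hij => hcop i j hij (L i) (hL i)).isBTGroup
end
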